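/- For every 0 ≤ α < 2 there exists a pair of locally finite positive Borel measures σ, ω on ℝ² such that the fractional Muckenhoupt constants A₂^α and A₂^{α,*} are finite, the energy constants E₂^α and E₂^{α,*} are finite, but the Riesz-transform off-testing constants R_{m,off,α} (m = 1, 2) are infinite. -/

import Mathlib

/-!
Put `β = 2 - α`. Let `a n` be scales decreasing so fast that `a n` and `a n ^ β` lose a factor
`8 ^ (n + 1)` at step `n`. The measure `ω` is the uniform probability measure on the Cantor set of
heights `∑ xⱼ aⱼ`, `xⱼ ∈ {0, 1}`, on the vertical axis. Every word of length `n` is assigned a point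
to the lower left of its piece of the Cantor set, at distance comparable to `a n`, and `σ` places the
mass `2 ^ n * a n ^ (2 * β)` there.

*Off-testing.* The piece of the Cantor set attached to a point of generation `n` has mass `2⁻ⁿ` and
lies to its upper right, so it contributes about `2⁻ⁿ * a n ^ (-β)` to both Riesz transforms of `ω`.
The remaining part of `ω` is at distance at least `a (n - 1) / 2` and is negligible. Squaring and
summing over the `2 ^ n` points, each generation contributes at least a fixed constant to the
off-testing integral over a cube that contains the Cantor set and no point mass (`riesz_inner_ge`),
so the integral diverges.

*Muckenhoupt constants.* If a cube has positive `ω`-mass, the words of its points have a longest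
common prefix, of length `k`; then its side length is at least comparable to `a k`, its mass is at
most `2⁻ᵏ`, and the tail of `σ` seen from it is a geometric sum along the branch plus a remainder, in
all `O(2 ^ k)` (`sigma_tail_le`). Dually, a cube that contains a point mass of generation `n` sees
`ω` from distance at least `a n` (`omega_tail_le`).

*Energy constants.* The energy involves the gradient kernel `D ^ (-(1 + β))` times the square root of
a variance. For the variance of `ω` in a cube of scale `a k`, the extra factor `a k / D` makes the
masses of earlier generations negligible, and only the mass of generation `k` itself is left
(`energy_tail_le`). What is left sums to a multiple of `σ Q` over disjoint subcubes, because the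
function `pathMass` has integral `σ Q`. For the variance of `σ`, a single point mass has variance
zero, and any further mass in the cube, of generation `m + 1`, forces the side length to be comparable
to at least `a m`, which makes its contribution geometrically small (`variance_term_le`).
-/

open MeasureTheory Set ENNReal

noncomputable section

/-- The plane `ℝ²` with the Euclidean metric. -/
abbrev Plane := EuclideanSpace ℝ (Fin 2)

/-- Half-open axis-parallel cube with center `c` and half-side `h` (side length `2h`). -/
def cube (c : Plane) (h : ℝ) : Set Plane := {x | ∀ i, c i - h ≤ x i ∧ x i < c i + h}

/-- The reproducing Poisson integral `𝒫^α(Q,μ)` of the cube with center `c` and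
side length `2h`. -/
def reprPoisson (α : ℝ) (c : Plane) (h : ℝ) (μ : Measure Plane) : ℝ≥0∞ :=
  ∫⁻ x, ENNReal.ofReal ((2 * h / (2 * h + dist x c) ^ 2) ^ (2 - α)) ∂μ

/-- The standard Poisson integral `P^α(Q,μ)` of the cube with center `c` and
side length `2h`. -/
def stdPoisson (α : ℝ) (c : Plane) (h : ℝ) (μ : Measure Plane) : ℝ≥0∞ :=
  ∫⁻ x, ENNReal.ofReal (2 * h / (2 * h + dist x c) ^ (3 - α)) ∂μ

/-- The fractional Muckenhoupt constant `A₂^α(σ,ω)`; the dual constant `A₂^{α,*}`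
is obtained by interchanging the measures. -/
def muckA2 (α : ℝ) (σ ω : Measure Plane) : ℝ≥0∞ :=
  ⨆ (c : Plane) (h : ℝ) (_ : 0 < h),
    reprPoisson α c h (σ.restrict (cube c h)ᶜ) * ω (cube c h) /
      ENNReal.ofReal (((2 * h) ^ 2) ^ (1 - α / 2))

/-- `m^μ_S`: the `μ`-average of `x` over `S`. -/
def mMean (μ : Measure Plane) (S : Set Plane) : Plane :=
  (μ S).toReal⁻¹ • ∫ x in S, x ∂μ

/-- The energy constant `(E₂^α)²(σ,ω)`: the supremum over axis-parallel cubes `Q`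
and countable decompositions of `Q` into pairwise disjoint subcubes of
`σ(Q)⁻¹ Σ_r (P^α(Q_r, 1_Q σ)/|Q_r|^{1/2})² ‖x - m^ω_{Q_r}‖²_{L²(1_{Q_r}ω)}`.
The dual constant `(E₂^{α,*})²` is obtained by interchanging the measures. -/
def energyConst (α : ℝ) (σ ω : Measure Plane) : ℝ≥0∞ :=
  ⨆ (c : Plane) (h : ℝ) (_ : 0 < h) (cr : ℕ → Plane) (hr : ℕ → ℝ) (_ : ∀ r, 0 ≤ hr r)
    (_ : ∀ r, cube (cr r) (hr r) ⊆ cube c h)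
    (_ : Pairwise (Function.onFun Disjoint fun r => cube (cr r) (hr r)))
    (_ : cube c h = ⋃ r, cube (cr r) (hr r)),
    (σ (cube c h))⁻¹ *
      ∑' r : ℕ,
        (stdPoisson α (cr r) (hr r) (σ.restrict (cube c h)) / ENNReal.ofReal (2 * hr r)) ^ 2 *
          ∫⁻ x in cube (cr r) (hr r),
            ENNReal.ofReal (dist x (mMean ω (cube (cr r) (hr r))) ^ 2) ∂ω

/-- The off-testing constant `T²_{off,α}` for the fractional integral `I^α`. -/
def offTest (α : ℝ) (σ ω : Measure Plane) : ℝ≥0∞ :=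
  ⨆ (c : Plane) (h : ℝ) (_ : 0 < h),
    (ω (cube c h))⁻¹ *
      ∫⁻ x in (cube c h)ᶜ,
        (∫⁻ y in cube c h, ENNReal.ofReal (dist x y ^ (α - 2)) ∂ω) ^ 2 ∂σ

/-- The off-testing constant `R²_{m,off,α}` for the `m`-th Riesz transform. -/
def rieszOffTest (α : ℝ) (m : Fin 2) (σ ω : Measure Plane) : ℝ≥0∞ :=
  ⨆ (c : Plane) (h : ℝ) (_ : 0 < h),
    (ω (cube c h))⁻¹ *
      ∫⁻ x in (cube c h)ᶜ,
        ENNReal.ofReal ((∫ t in cube c h, (t m - x m) * dist x t ^ (α - 3) ∂ω) ^ 2) ∂σ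

/-! ### Scales, binary sequences and the points of the construction -/

/-- A rapidly decreasing sequence of scales adapted to the exponent `β = 2 - α`: both `a n` and
`a n ^ β` lose at least a factor `8 ^ (n + 1)` from generation `n` to generation `n + 1`. -/
structure Scale (β : ℝ) (a : ℕ → ℝ) : Prop where
  bpos : 0 < β
  ble : β ≤ 2
  zero : a 0 = 1
  pos : ∀ n, 0 < a n
  step : ∀ n, a (n + 1) ≤ a n / 8 ^ (n + 1)
  stepb : ∀ n, a (n + 1) ^ β ≤ a n ^ β / 8 ^ (n + 1)

theorem exists_scale {β : ℝ} (h0 : 0 < β) (h2 : β ≤ 2) : ∃ a, Scale β a := by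
  set s : ℝ := max 1 (1 / β) with hs
  have hs1 : 1 ≤ s := le_max_left _ _
  have hsb : 1 ≤ s * β := by
    have : 1 / β ≤ s := le_max_right _ _
    rwa [div_le_iff₀ h0] at this
  have key : ∀ (n : ℕ) (e : ℝ), 1 ≤ e →
      (8 : ℝ) ^ (-(e * ((n + 1 : ℕ) : ℝ) ^ 2)) ≤ (8 : ℝ) ^ (-(e * (n : ℝ) ^ 2)) / 8 ^ (n + 1) := by
    intro n e he
    rw [← Real.rpow_natCast 8 (n + 1), ← Real.rpow_sub (by norm_num)]
    apply Real.rpow_le_rpow_of_exponent_le (by norm_num)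
    push_cast
    have hn : (0 : ℝ) ≤ n := Nat.cast_nonneg n
    nlinarith
  refine ⟨fun n => (8 : ℝ) ^ (-(s * (n : ℝ) ^ 2)), h0, h2, by simp, fun n => by positivity,
    fun n => key n s hs1, fun n => ?_⟩
  rw [← Real.rpow_mul (by norm_num), ← Real.rpow_mul (by norm_num)]
  have := key n (s * β) hsb
  convert this using 3 <;> ring

namespace Scale

variable {β : ℝ} {a : ℕ → ℝ}

theorem step8 (H : Scale β a) (n : ℕ) : a (n + 1) ≤ a n / 8 := by
  refine (H.step n).trans ?_
  have h8 : (8 : ℝ) ≤ 8 ^ (n + 1) := by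
    calc (8 : ℝ) = 8 ^ 1 := by norm_num
      _ ≤ 8 ^ (n + 1) := pow_le_pow_right₀ (by norm_num) (by omega)
  exact div_le_div_of_nonneg_left (H.pos n).le (by norm_num) h8

theorem anti (H : Scale β a) : Antitone a :=
  antitone_nat_of_succ_le fun n => (H.step8 n).trans (by linarith [H.pos n])

theorem lt8 (H : Scale β a) {m n : ℕ} (h : m < n) : a n ≤ a m / 8 :=
  (H.anti (Nat.succ_le_of_lt h)).trans (H.step8 m)

theorem le_one (H : Scale β a) (n : ℕ) : a n ≤ 1 := by
  rw [← H.zero]; exact H.anti (Nat.zero_le n)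

theorem geom (H : Scale β a) (n i : ℕ) : a (i + n) ≤ a n * (1 / 2) ^ i := by
  induction i with
  | zero => simp
  | succ i ih =>
    have h1 := H.step8 (i + n)
    have h2 := H.pos (i + n)
    rw [show i + 1 + n = i + n + 1 by ring, pow_succ]
    linarith

theorem summable (H : Scale β a) : Summable a := by
  refine Summable.of_nonneg_of_le (fun n => (H.pos n).le) (fun n => ?_) summable_geometric_two
  simpa [H.zero] using H.geom 0 n

end Scale

/-- Infinite binary words; they parametrise the boundary of the binary tree. -/
abbrev BinSeq := ℕ → Bool

/-- `x` and `y` have the same first `n` digits. -/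
def agree (n : ℕ) (x y : BinSeq) : Prop := ∀ i < n, x i = y i

theorem agree.mono {m n : ℕ} {x y : BinSeq} (h : agree n x y) (hmn : m ≤ n) : agree m x y :=
  fun i hi => h i (hi.trans_le hmn)

theorem agree.symm {n : ℕ} {x y : BinSeq} (h : agree n x y) : agree n y x :=
  fun i hi => (h i hi).symm

theorem agree.trans {n : ℕ} {x y z : BinSeq} (h : agree n x y) (h' : agree n y z) : agree n x z :=
  fun i hi => (h i hi).trans (h' i hi)

theorem exists_first_diff {n : ℕ} {x y : BinSeq} (h : ¬ agree n x y) :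
    ∃ k < n, agree k x y ∧ x k ≠ y k := by
  classical
  unfold agree at h
  push Not at h
  obtain ⟨h1, h2⟩ := Nat.find_spec h
  refine ⟨Nat.find h, h1, fun i hi => ?_, h2⟩
  by_contra hne
  exact Nat.find_min h hi ⟨hi.trans h1, hne⟩

/-- The word `x` with all digits from place `n` on replaced by `0`. -/
def tr (n : ℕ) (x : BinSeq) : BinSeq := fun i => if i < n then x i else false

theorem agree_tr (n : ℕ) (x : BinSeq) : agree n (tr n x) x := fun i hi => by simp [tr, hi]

theorem tr_congr {n : ℕ} {x y : BinSeq} (h : agree n x y) : tr n x = tr n y := by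
  funext i
  by_cases hi : i < n
  · simp [tr, hi, h i hi]
  · simp [tr, hi]

/-- A binary digit as a real number. -/
def dig (b : Bool) : ℝ := if b then 1 else 0

theorem dig_nonneg (b : Bool) : 0 ≤ dig b := by cases b <;> simp [dig]
theorem dig_le (b : Bool) : dig b ≤ 1 := by cases b <;> simp [dig]

/-- The height `∑ xⱼ aⱼ` coded by the word `x`. The heights form a Cantor set of dimension `0`. -/
def ht (a : ℕ → ℝ) (x : BinSeq) : ℝ := ∑' j, dig (x j) * a j

/-- The point of the Cantor set on the vertical axis that carries `ω`. -/
def gpt (a : ℕ → ℝ) (x : BinSeq) : Plane := !₂[0, ht a x]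

/-- The point mass position attached to the word of length `n` that begins `x`: it lies to the
lower left of the corresponding piece of the Cantor set, at distance comparable to `a n`. -/
def ppt (a : ℕ → ℝ) (n : ℕ) (x : BinSeq) : Plane := !₂[-a n, ht a (tr n x) - a n]

section geometry

variable {β : ℝ} {a : ℕ → ℝ}

@[simp] theorem gpt_zero (x : BinSeq) : gpt a x 0 = 0 := rfl
@[simp] theorem gpt_one (x : BinSeq) : gpt a x 1 = ht a x := rfl
@[simp] theorem ppt_zero (n : ℕ) (x : BinSeq) : ppt a n x 0 = -a n := rfl
@[simp] theorem ppt_one (n : ℕ) (x : BinSeq) : ppt a n x 1 = ht a (tr n x) - a n := rfl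

theorem ppt_congr {n : ℕ} {x y : BinSeq} (h : agree n x y) : ppt a n x = ppt a n y := by
  simp [ppt, tr_congr h]

theorem summable_dig (H : Scale β a) (x : BinSeq) : Summable fun j => dig (x j) * a j :=
  Summable.of_nonneg_of_le (fun j => mul_nonneg (dig_nonneg _) (H.pos j).le)
    (fun j => mul_le_of_le_one_left (H.pos j).le (dig_le _)) H.summable

theorem ht_mono (H : Scale β a) {x y : BinSeq} (h : ∀ i, dig (x i) ≤ dig (y i)) :
    ht a x ≤ ht a y :=
  (summable_dig H x).tsum_le_tsum (fun i => mul_le_mul_of_nonneg_right (h i) (H.pos i).le)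
    (summable_dig H y)

theorem ht_sub (H : Scale β a) (x y : BinSeq) :
    ht a x - ht a y = ∑' j, (dig (x j) - dig (y j)) * a j := by
  rw [ht, ht, ← (summable_dig H x).tsum_sub (summable_dig H y)]
  simp [sub_mul]

theorem ht_close (H : Scale β a) {n : ℕ} {x y : BinSeq} (h : agree n x y) :
    |ht a x - ht a y| ≤ 2 * a n := by
  have hs : Summable fun j => (dig (x j) - dig (y j)) * a j := by
    simpa [sub_mul] using (summable_dig H x).sub (summable_dig H y)
  rw [ht_sub H, ← hs.sum_add_tsum_nat_add n, Finset.sum_eq_zero, zero_add]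
  · have hg : HasSum (fun i : ℕ => a n * (1 / 2 : ℝ) ^ i) (2 * a n) := by
      rw [mul_comm 2]; exact hasSum_geometric_two.mul_left (a n)
    rw [← Real.norm_eq_abs]
    refine tsum_of_norm_bounded hg fun i => ?_
    refine le_trans ?_ (H.geom n i)
    rw [Real.norm_eq_abs, abs_mul, abs_of_pos (H.pos _)]
    refine mul_le_of_le_one_left (H.pos _).le ?_
    rw [abs_le]
    constructor <;> linarith [dig_nonneg (x (i + n)), dig_nonneg (y (i + n)), dig_le (x (i + n)),
      dig_le (y (i + n))]
  · intro i hi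
    rw [h i (Finset.mem_range.1 hi)]
    simp

theorem ht_far_aux (H : Scale β a) {k : ℕ} {x y : BinSeq} (h : agree k x y) (hx : x k = true)
    (hy : y k = false) : 3 / 4 * a k ≤ ht a x - ht a y := by
  -- Raising the digit `k` of `y` changes its height by exactly `a k` and makes it close to `x`.
  set z : BinSeq := Function.update y k true with hz
  have h1 : agree (k + 1) x z := by
    intro i hi
    rcases Nat.lt_succ_iff_lt_or_eq.1 hi with h' | rfl
    · rw [hz, Function.update_of_ne h'.ne, h i h']
    · rw [hz, Function.update_self, hx]
  have h2 : ht a z - ht a y = a k := by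
    rw [ht_sub H, tsum_eq_single k]
    · simp [hz, hy, dig]
    · intro j hj
      simp [hz, Function.update_of_ne hj]
  have h3 := (abs_le.1 (ht_close H h1)).1
  linarith [H.step8 k]

/-- Words that split at place `k` have heights at distance at least `3 / 4 * a k`. -/
theorem ht_far (H : Scale β a) {k : ℕ} {x y : BinSeq} (h : agree k x y) (hk : x k ≠ y k) :
    3 / 4 * a k ≤ |ht a x - ht a y| := by
  rcases hx : x k with _ | _
  · have hy : y k = true := by rw [hx] at hk; simpa using hk.symm
    rw [abs_sub_comm]
    exact (ht_far_aux H h.symm hy hx).trans (le_abs_self _)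
  · have hy : y k = false := by rw [hx] at hk; simpa using hk.symm
    exact (ht_far_aux H h hx hy).trans (le_abs_self _)

theorem coord_le_dist (z w : Plane) (i : Fin 2) : |z i - w i| ≤ dist z w := by
  rw [dist_eq_norm]
  simpa using PiLp.norm_apply_le (z - w) i

theorem dist_le_coord (z w : Plane) : dist z w ≤ |z 0 - w 0| + |z 1 - w 1| := by
  rw [EuclideanSpace.dist_eq, Fin.sum_univ_two, Real.dist_eq, Real.dist_eq]
  refine Real.sqrt_le_iff.2 ⟨by positivity, ?_⟩
  nlinarith [abs_nonneg (z 0 - w 0), abs_nonneg (z 1 - w 1)]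

theorem dist_le_of_mem {c : Plane} {h : ℝ} {z : Plane} (hz : z ∈ cube c h) :
    dist z c ≤ 2 * h := by
  refine (dist_le_coord z c).trans ?_
  have h0 : |z 0 - c 0| ≤ h := abs_le.2 ⟨by linarith [(hz 0).1], by linarith [(hz 0).2]⟩
  have h1 : |z 1 - c 1| ≤ h := abs_le.2 ⟨by linarith [(hz 1).1], by linarith [(hz 1).2]⟩
  linarith

/-- A point of the cube sees every other point at distance at most `2 * h + dist z c`, the
denominator of the Poisson kernels. -/
theorem dist_le_kernel {c : Plane} {h : ℝ} {w z : Plane} (hw : w ∈ cube c h) :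
    dist z w ≤ 2 * h + dist z c := by
  have := dist_triangle z c w
  rw [dist_comm c w] at this
  linarith [dist_le_of_mem hw]

theorem coord_lt_side {c : Plane} {h : ℝ} {w z : Plane} (hw : w ∈ cube c h) (hz : z ∈ cube c h)
    (i : Fin 2) : |z i - w i| ≤ 2 * h :=
  abs_le.2 ⟨by linarith [(hz i).1, (hw i).2], by linarith [(hz i).2, (hw i).1]⟩

theorem dist_le_side {c : Plane} {h : ℝ} {w z : Plane} (hw : w ∈ cube c h) (hz : z ∈ cube c h) :
    dist z w ≤ 2 * (2 * h) := by
  linarith [dist_le_coord z w, coord_lt_side hw hz 0, coord_lt_side hw hz 1]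

theorem pos_of_mem {c : Plane} {h : ℝ} {z : Plane} (hz : z ∈ cube c h) : 0 < h := by
  linarith [(hz 0).1, (hz 0).2]

theorem dist_gpt_le (H : Scale β a) {n : ℕ} {x y : BinSeq} (h : agree n x y) :
    dist (gpt a x) (gpt a y) ≤ 2 * a n := by
  refine (dist_le_coord _ _).trans ?_
  simpa using ht_close H h

theorem dist_ppt_gpt_ge (H : Scale β a) (n : ℕ) (x y : BinSeq) :
    a n ≤ dist (ppt a n x) (gpt a y) := by
  have := coord_le_dist (ppt a n x) (gpt a y) 0
  simpa [abs_of_pos (H.pos n)] using this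

/-- A point mass of generation `n + 1` is at distance at least `a n / 2` from the part of the Cantor
set outside its own piece. -/
theorem dist_ppt_gpt_ge' (H : Scale β a) {n : ℕ} {x y : BinSeq} (h : ¬ agree (n + 1) x y) :
    a n / 2 ≤ dist (ppt a (n + 1) x) (gpt a y) := by
  obtain ⟨k, hk, hag, hne⟩ := exists_first_diff h
  have h1 : agree k (tr (n + 1) x) y := ((agree_tr (n + 1) x).mono hk.le).trans hag
  have h2 : tr (n + 1) x k ≠ y k := by rw [agree_tr (n + 1) x k hk]; exact hne
  have h3 := ht_far H h1 h2
  have h4 := coord_le_dist (ppt a (n + 1) x) (gpt a y) 1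
  simp only [ppt_one, gpt_one] at h4
  have h5 := abs_sub_abs_le_abs_sub (ht a (tr (n + 1) x) - ht a y) (a (n + 1))
  rw [abs_of_pos (H.pos (n + 1)), show ht a (tr (n + 1) x) - ht a y - a (n + 1)
    = ht a (tr (n + 1) x) - a (n + 1) - ht a y by ring] at h5
  have h6 := H.lt8 hk
  have h7 := H.anti (Nat.lt_succ_iff.1 hk)
  have h8 := H.pos k
  linarith

/-- Two different point masses, the shallower one of generation `m ≤ n + 1`, are separated by
a distance comparable to `a n`. -/
theorem dist_ppt_ppt_ge (H : Scale β a) {m n : ℕ} {x y : BinSeq} (hmn : m ≤ n + 1)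
    (h : ¬ (m = n + 1 ∧ agree (n + 1) x y)) :
    a n / 2 ≤ dist (ppt a (n + 1) x) (ppt a m y) := by
  rcases hmn.lt_or_eq with hlt | rfl
  · have h0 := coord_le_dist (ppt a (n + 1) x) (ppt a m y) 0
    simp only [ppt_zero] at h0
    have h1 := le_abs_self (-a (n + 1) - -a m)
    have h2 := H.anti (Nat.lt_succ_iff.1 hlt)
    have h3 := H.step8 n
    have h4 := H.pos n
    linarith
  · have hna : ¬ agree (n + 1) x y := fun hh => h ⟨rfl, hh⟩
    obtain ⟨k, hk, hag, hne⟩ := exists_first_diff hna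
    have h1 : agree k (tr (n + 1) x) (tr (n + 1) y) :=
      (((agree_tr (n + 1) x).mono hk.le).trans hag).trans ((agree_tr (n + 1) y).mono hk.le).symm
    have h2 : tr (n + 1) x k ≠ tr (n + 1) y k := by
      rw [agree_tr (n + 1) x k hk, agree_tr (n + 1) y k hk]; exact hne
    have h3 := ht_far H h1 h2
    have h4 := coord_le_dist (ppt a (n + 1) x) (ppt a (n + 1) y) 1
    simp only [ppt_one, sub_sub_sub_cancel_right] at h4
    have h5 := H.anti (Nat.lt_succ_iff.1 hk)
    have h6 := H.pos k
    linarith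

end geometry

/-! ### The two measures -/

/-- The law of independent fair coin tosses on binary words. -/
def coin : Measure BinSeq := Measure.infinitePi fun _ => (PMF.uniformOfFintype Bool).toMeasure

instance : IsProbabilityMeasure coin := by unfold coin; infer_instance

theorem setOf_agree_eq (n : ℕ) (y : BinSeq) :
    {x | agree n x y} = Set.pi (Finset.range n : Set ℕ) fun i => {y i} := by
  ext x; simp [agree]

theorem measurableSet_agree (n : ℕ) (y : BinSeq) : MeasurableSet {x | agree n x y} := by
  rw [setOf_agree_eq]
  exact MeasurableSet.pi (Finset.countable_toSet _) fun i _ => measurableSet_singleton _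

theorem coin_agree (n : ℕ) (y : BinSeq) :
    coin {x | agree n x y} = ENNReal.ofReal ((1 / 2) ^ n) := by
  rw [setOf_agree_eq, coin, Measure.infinitePi_pi _ fun i _ => measurableSet_singleton _]
  have h2 : ENNReal.ofReal (1 / 2) = 2⁻¹ := by
    rw [one_div, ENNReal.ofReal_inv_of_pos (by norm_num)]; simp
  have h1 : ∀ i, (PMF.uniformOfFintype Bool).toMeasure {y i} = ENNReal.ofReal (1 / 2) := by
    intro i
    rw [PMF.toMeasure_apply_singleton _ _ (measurableSet_singleton _), h2]
    simp
  simp_rw [h1]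
  rw [Finset.prod_const, Finset.card_range, ENNReal.ofReal_pow (by norm_num)]

/-- The measure `ω`: the uniform probability measure on the Cantor set. -/
def omegaM (a : ℕ → ℝ) : Measure Plane := coin.map (gpt a)

/-- The square root of the total `σ`-mass of generation `n`. -/
def tm (β : ℝ) (a : ℕ → ℝ) (n : ℕ) : ℝ := 2 ^ n * a n ^ β

/-- The measure `σ`: each of the `2 ^ n` points `ppt a n x` of generation `n` receives the mass
`2 ^ n * a n ^ (2 * β)`, which up to a constant is the largest one
allowed by the Muckenhoupt condition. -/
def sigmaM (β : ℝ) (a : ℕ → ℝ) : Measure Plane :=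
  Measure.sum fun n => ENNReal.ofReal (tm β a n ^ 2) • coin.map (ppt a n)

theorem measurable_plane {X : Type*} [MeasurableSpace X] {u v : X → ℝ} (hu : Measurable u)
    (hv : Measurable v) : Measurable fun x => (!₂[u x, v x] : Plane) := by
  refine (WithLp.measurable_toLp 2 (Fin 2 → ℝ)).comp (measurable_pi_lambda _ fun i => ?_)
  fin_cases i
  · exact hu
  · exact hv

theorem measurable_tr (n : ℕ) : Measurable (tr n) := by
  refine measurable_pi_lambda _ fun i => ?_
  by_cases hi : i < n
  · simpa [tr, hi] using measurable_pi_apply i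
  · simp [tr, hi]

theorem measurableSet_cube (c : Plane) (h : ℝ) : MeasurableSet (cube c h) := by
  have : cube c h = ⋂ i, {x : Plane | c i - h ≤ x i ∧ x i < c i + h} := by
    ext x; simp [cube]
  rw [this]
  refine MeasurableSet.iInter fun i => ?_
  have hm : Measurable fun x : Plane => x i := by fun_prop
  exact (measurableSet_le measurable_const hm).inter (measurableSet_lt hm measurable_const)

section measures

variable {β : ℝ} {a : ℕ → ℝ}

theorem measurable_ht (H : Scale β a) : Measurable (ht a) := by
  refine (continuous_tsum (u := a) (fun i => ?_) H.summable fun n x => ?_).measurable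
  · exact ((continuous_of_discreteTopology (f := dig)).comp (continuous_apply i)).mul_const _
  · rw [Real.norm_of_nonneg (mul_nonneg (dig_nonneg _) (H.pos n).le)]
    exact mul_le_of_le_one_left (H.pos n).le (dig_le _)

theorem measurable_gpt (H : Scale β a) : Measurable (gpt a) :=
  measurable_plane measurable_const (measurable_ht H)

theorem measurable_ppt (H : Scale β a) (n : ℕ) : Measurable (ppt a n) :=
  measurable_plane measurable_const (((measurable_ht H).comp (measurable_tr n)).sub_const _)

theorem isProb_omega (H : Scale β a) : IsProbabilityMeasure (omegaM a) :=
  Measure.isProbabilityMeasure_map (measurable_gpt H).aemeasurable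

theorem omega_apply (H : Scale β a) {S : Set Plane} (hS : MeasurableSet S) :
    omegaM a S = coin (gpt a ⁻¹' S) :=
  Measure.map_apply (measurable_gpt H) hS

theorem setLIntegral_omega (H : Scale β a) {S : Set Plane} (hS : MeasurableSet S)
    {F : Plane → ℝ≥0∞} (hF : Measurable F) :
    ∫⁻ z in S, F z ∂(omegaM a) = ∫⁻ x in gpt a ⁻¹' S, F (gpt a x) ∂coin :=
  setLIntegral_map hS hF (measurable_gpt H)

theorem setLIntegral_sigma (H : Scale β a) {S : Set Plane} (hS : MeasurableSet S)
    {F : Plane → ℝ≥0∞} (hF : Measurable F) :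
    ∫⁻ z in S, F z ∂(sigmaM β a) =
      ∑' n, ENNReal.ofReal (tm β a n ^ 2) * ∫⁻ x in ppt a n ⁻¹' S, F (ppt a n x) ∂coin := by
  rw [sigmaM, Measure.restrict_sum _ hS, lintegral_sum_measure]
  refine tsum_congr fun n => ?_
  rw [Measure.restrict_smul, lintegral_smul_measure, setLIntegral_map hS hF (measurable_ppt H n)]
  rfl

theorem sigma_apply (H : Scale β a) {S : Set Plane} (hS : MeasurableSet S) :
    sigmaM β a S = ∑' n, ENNReal.ofReal (tm β a n ^ 2) * coin (ppt a n ⁻¹' S) := by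
  have := setLIntegral_sigma H hS (F := fun _ => 1) measurable_const
  simpa using this

theorem tm_pos (H : Scale β a) (n : ℕ) : 0 < tm β a n :=
  mul_pos (by positivity) (Real.rpow_pos_of_pos (H.pos n) _)

theorem tm_succ_le (H : Scale β a) (n : ℕ) :
    tm β a (n + 1) ≤ (1 / 4) ^ (n + 1) * a n ^ β := by
  have h := mul_le_mul_of_nonneg_left (H.stepb n) (by positivity : (0 : ℝ) ≤ 2 ^ (n + 1))
  refine h.trans (le_of_eq ?_)
  rw [show (8 : ℝ) = 2 * 4 by norm_num, mul_pow, one_div, inv_pow]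
  field_simp

/-- The masses `tm β a n ^ 2` of the generations are geometrically small, so `σ` is finite. -/
theorem tm_le (H : Scale β a) (n : ℕ) : tm β a n ≤ (1 / 4) ^ n := by
  cases n with
  | zero => simp [tm, H.zero]
  | succ n =>
    refine (tm_succ_le H n).trans (mul_le_of_le_one_right (by positivity) ?_)
    exact Real.rpow_le_one (H.pos n).le (H.le_one n) H.bpos.le

theorem tsum_half : ∑' n : ℕ, ENNReal.ofReal ((1 / 2) ^ n) = 2 := by
  rw [← ENNReal.ofReal_tsum_of_nonneg (fun n => by positivity) summable_geometric_two,
    tsum_geometric_two]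
  simp

theorem isFinite_sigma (H : Scale β a) : IsFiniteMeasure (sigmaM β a) := by
  refine ⟨lt_of_le_of_lt (b := 2) ?_ (by simp)⟩
  rw [sigma_apply H MeasurableSet.univ, ← tsum_half]
  refine ENNReal.tsum_le_tsum fun n => ?_
  simp only [preimage_univ, measure_univ, mul_one]
  refine ENNReal.ofReal_le_ofReal ?_
  calc tm β a n ^ 2 ≤ ((1 / 4) ^ n) ^ 2 :=
        pow_le_pow_left₀ (tm_pos H n).le (tm_le H n) 2
    _ = ((1 / 16) ^ n : ℝ) := by rw [← pow_mul, mul_comm, pow_mul]; norm_num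
    _ ≤ (1 / 2) ^ n := by gcongr; norm_num

/-- The mean minimises the quadratic deviation, so it may be replaced by any other point. -/
theorem variance_le (μ : Measure Plane) [IsFiniteMeasure μ] (c : Plane) (h : ℝ) (z : Plane) :
    ∫⁻ x in cube c h, ENNReal.ofReal (dist x (mMean μ (cube c h)) ^ 2) ∂μ ≤
      ∫⁻ x in cube c h, ENNReal.ofReal (dist x z ^ 2) ∂μ := by
  set ν := μ.restrict (cube c h) with hν
  by_cases h0 : ν = 0
  · simp [h0]
  have hbdd : ∀ᵐ x ∂ν, ‖x - c‖ ≤ 2 * h := by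
    refine (ae_restrict_iff' (measurableSet_cube c h)).2 (Filter.Eventually.of_forall fun x hx => ?_)
    rw [← dist_eq_norm]; exact dist_le_of_mem hx
  have hi0 : Integrable (fun x : Plane => x - c) ν :=
    Integrable.of_bound (by fun_prop) _ hbdd
  have hi : Integrable (fun x : Plane => x) ν := by
    exact (hi0.add (integrable_const c)).congr (Filter.Eventually.of_forall fun x => by simp)
  have hi1 : ∀ w : Plane, Integrable (fun x : Plane => x - w) ν := fun w =>
    hi.sub (integrable_const w)
  have hsq : ∀ w : Plane, Integrable (fun x : Plane => ‖x - w‖ ^ 2) ν := by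
    intro w
    refine Integrable.of_bound (by fun_prop) ((2 * h + ‖c - w‖) ^ 2) ?_
    filter_upwards [hbdd] with x hx
    rw [Real.norm_of_nonneg (by positivity)]
    refine pow_le_pow_left₀ (norm_nonneg _) ?_ 2
    calc ‖x - w‖ = ‖(x - c) + (c - w)‖ := by congr 1; abel
      _ ≤ ‖x - c‖ + ‖c - w‖ := norm_add_le _ _
      _ ≤ _ := by linarith
  set m := mMean μ (cube c h) with hm
  have hm' : ∫ x, (x - m) ∂ν = 0 := by
    rw [integral_sub hi (integrable_const m), integral_const, hm, mMean, smul_smul]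
    have hne : (μ (cube c h)).toReal ≠ 0 := by
      intro h1
      apply h0
      rcases (ENNReal.toReal_eq_zero_iff _).1 h1 with h2 | h2
      · rw [hν, Measure.restrict_eq_zero]; exact h2
      · exact absurd h2 (measure_ne_top _ _)
    have : ν.real univ = (μ (cube c h)).toReal := by
      rw [Measure.real, hν, Measure.restrict_apply_univ]
    rw [this, mul_inv_cancel₀ hne, one_smul, sub_self]
  have hinner : ∫ x, inner ℝ (m - z) (x - m) ∂ν = 0 := by
    rw [integral_inner (hi1 m), hm', inner_zero_right]
  have hexp : ∀ x : Plane, ‖x - z‖ ^ 2 =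
      ‖x - m‖ ^ 2 + (2 * inner ℝ (m - z) (x - m) + ‖m - z‖ ^ 2) := by
    intro x
    rw [show x - z = (x - m) + (m - z) by abel, norm_add_sq_real, real_inner_comm]
    ring
  have hii : Integrable (fun x : Plane => (inner ℝ (m - z) (x - m) : ℝ)) ν :=
    (hi1 m).const_inner _
  have hle : ∫ x, ‖x - m‖ ^ 2 ∂ν ≤ ∫ x, ‖x - z‖ ^ 2 ∂ν := by
    have hadd : Integrable (fun x : Plane => 2 * inner ℝ (m - z) (x - m) + ‖m - z‖ ^ 2) ν :=
      (hii.const_mul 2).add (integrable_const _)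
    rw [funext hexp, integral_add (hsq m) hadd,
      integral_add (hii.const_mul 2) (integrable_const _), integral_const_mul, hinner,
      integral_const]
    have : 0 ≤ ν.real univ • ‖m - z‖ ^ 2 := by positivity
    linarith
  simp_rw [dist_eq_norm]
  rw [← ofReal_integral_eq_lintegral_ofReal (hsq m) (Filter.Eventually.of_forall fun _ => by positivity),
    ← ofReal_integral_eq_lintegral_ofReal (hsq z) (Filter.Eventually.of_forall fun _ => by positivity)]
  exact ENNReal.ofReal_le_ofReal hle

end measures

/-! ### The kernels and the position of a cube relative to the tree -/

section kernels

/-- The normalising factors of the Muckenhoupt condition cancel and leave the kernel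
`(2 * h + dist x c) ^ (-2 * (2 - α))`. -/
theorem muck_term_le (α : ℝ) (c : Plane) {h : ℝ} (hh : 0 < h) (μ : Measure Plane) (M : ℝ≥0∞) :
    reprPoisson α c h μ * M / ENNReal.ofReal (((2 * h) ^ 2) ^ (1 - α / 2)) ≤
      (∫⁻ x, ENNReal.ofReal ((2 * h + dist x c) ^ (-(2 * (2 - α)))) ∂μ) * M := by
  have h2 : 0 < 2 * h := by linarith
  have e1 : ((2 * h) ^ 2) ^ (1 - α / 2) = (2 * h) ^ (2 - α) := by
    rw [← Real.rpow_natCast (2 * h) 2, ← Real.rpow_mul h2.le]; congr 1; push_cast; ring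
  have e2 : reprPoisson α c h μ = ENNReal.ofReal ((2 * h) ^ (2 - α)) *
      ∫⁻ x, ENNReal.ofReal ((2 * h + dist x c) ^ (-(2 * (2 - α)))) ∂μ := by
    rw [reprPoisson, ← lintegral_const_mul' _ _ ENNReal.ofReal_ne_top]
    refine lintegral_congr fun x => ?_
    have hD : 0 < 2 * h + dist x c := by positivity
    rw [← ENNReal.ofReal_mul (by positivity), Real.div_rpow h2.le (by positivity),
      ← Real.rpow_natCast (2 * h + dist x c) 2, ← Real.rpow_mul hD.le, Real.rpow_neg hD.le,
      div_eq_mul_inv]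
    push_cast
    rfl
  have hpos : 0 < (2 * h) ^ (2 - α) := Real.rpow_pos_of_pos h2 _
  rw [e1, e2, mul_assoc]
  rw [mul_comm (ENNReal.ofReal _)]
  exact (ENNReal.mul_div_cancel_right (by simpa using hpos) ENNReal.ofReal_ne_top).le

theorem std_div_eq (α : ℝ) (c : Plane) {h : ℝ} (hh : 0 < h) (μ : Measure Plane) :
    stdPoisson α c h μ / ENNReal.ofReal (2 * h) =
      ∫⁻ x, ENNReal.ofReal ((2 * h + dist x c) ^ (-(3 - α))) ∂μ := by
  have h2 : 0 < 2 * h := by linarith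
  have e2 : stdPoisson α c h μ = ENNReal.ofReal (2 * h) *
      ∫⁻ x, ENNReal.ofReal ((2 * h + dist x c) ^ (-(3 - α))) ∂μ := by
    rw [stdPoisson, ← lintegral_const_mul' _ _ ENNReal.ofReal_ne_top]
    refine lintegral_congr fun x => ?_
    have hD : 0 < 2 * h + dist x c := by positivity
    rw [← ENNReal.ofReal_mul h2.le, Real.rpow_neg hD.le, div_eq_mul_inv]
  rw [e2, mul_comm (ENNReal.ofReal _)]
  exact ENNReal.mul_div_cancel_right (by simpa using h2) ENNReal.ofReal_ne_top

theorem measurable_kernel (c : Plane) (h s : ℝ) :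
    Measurable fun z : Plane => ENNReal.ofReal ((2 * h + dist z c) ^ s) := by
  refine ENNReal.measurable_ofReal.comp ?_
  have : Measurable fun z : Plane => 2 * h + dist z c := by fun_prop
  exact this.pow_const s

/-- A kernel estimate: negative powers of a quantity that is at least `b / 2`. -/
theorem rpow_neg_le {D b s : ℝ} {N : ℕ} (hb : 0 < b) (hs : 0 ≤ s) (hsN : s ≤ N) (h : b / 2 ≤ D) :
    D ^ (-s) ≤ 2 ^ N * b ^ (-s) := by
  have h2 : (2 : ℝ) ^ s ≤ 2 ^ N := by
    rw [← Real.rpow_natCast]; exact Real.rpow_le_rpow_of_exponent_le (by norm_num) hsN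
  calc D ^ (-s) ≤ (b / 2) ^ (-s) :=
        Real.rpow_le_rpow_of_nonpos (by positivity) h (by linarith)
    _ = 2 ^ s * b ^ (-s) := by
        rw [Real.div_rpow hb.le (by norm_num), Real.rpow_neg (by norm_num : (0 : ℝ) ≤ 2)]
        field_simp
    _ ≤ _ := by gcongr

variable {β : ℝ} {a : ℕ → ℝ}

/-- A set of words is null, or it has a longest common prefix, of length `k`, and two of its words
split at place `k`. -/
theorem coin_eq_zero_or (S : Set BinSeq) :
    coin S = 0 ∨ ∃ k x₀ x₁, x₀ ∈ S ∧ x₁ ∈ S ∧ agree k x₀ x₁ ∧ x₀ k ≠ x₁ k ∧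
      ∀ x ∈ S, agree k x x₀ := by
  classical
  by_cases hS : ∃ n, ∃ x ∈ S, ∃ y ∈ S, ¬ agree n x y
  · right
    obtain ⟨x, hx, y, hy, hxy⟩ := Nat.find_spec hS
    obtain ⟨k, hk, hag, hne⟩ := exists_first_diff hxy
    refine ⟨k, x, y, hx, hy, hag, hne, fun z hz => ?_⟩
    have := Nat.find_min hS hk
    push Not at this
    exact this z hz x hx
  · left
    push Not at hS
    rcases S.eq_empty_or_nonempty with rfl | ⟨x, hx⟩
    · simp
    · have hle : ∀ n, coin S ≤ ENNReal.ofReal ((1 / 2) ^ n) := fun n => by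
        rw [← coin_agree n x]
        exact measure_mono fun y hy => hS n y hy x hx
      have hlim : Filter.Tendsto (fun n : ℕ => ENNReal.ofReal ((1 / 2) ^ n)) Filter.atTop
          (nhds 0) := by
        rw [← ENNReal.ofReal_zero]
        exact ENNReal.tendsto_ofReal
          (tendsto_pow_atTop_nhds_zero_of_lt_one (by norm_num) (by norm_num))
      exact le_antisymm (ge_of_tendsto' hlim hle) bot_le

/-- A cube containing two points of the Cantor set whose words split at place `k` has side length at
least comparable to `a k`. -/
theorem side_ge (H : Scale β a) {c : Plane} {h : ℝ} {k : ℕ} {x₀ x₁ : BinSeq}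
    (h0 : gpt a x₀ ∈ cube c h) (h1 : gpt a x₁ ∈ cube c h) (hag : agree k x₀ x₁)
    (hne : x₀ k ≠ x₁ k) : 3 / 4 * a k ≤ 2 * h := by
  have := coord_lt_side h1 h0 1
  exact (ht_far H hag hne).trans (by simpa using this)

theorem kernel_ge_on (H : Scale β a) {c : Plane} {h : ℝ} {x₀ : BinSeq}
    (h0 : gpt a x₀ ∈ cube c h) (n : ℕ) (x : BinSeq) : a n ≤ 2 * h + dist (ppt a n x) c :=
  (dist_ppt_gpt_ge H n x x₀).trans (dist_le_kernel h0)

/-- A cube meeting the Cantor set at scale `a k` near `x₀` sees all the point masses outside the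
branch leading to `x₀`, or below generation `k`, from a distance of the previous scale. -/
theorem kernel_ge_off (H : Scale β a) {c : Plane} {h : ℝ} {k : ℕ} {x₀ : BinSeq}
    (h0 : gpt a x₀ ∈ cube c h) (hk : 3 / 4 * a k ≤ 2 * h) {n : ℕ} {x : BinSeq}
    (hoff : ¬ (n + 1 ≤ k ∧ agree (n + 1) x x₀)) :
    a n / 2 ≤ 2 * h + dist (ppt a (n + 1) x) c := by
  by_cases hag : agree (n + 1) x x₀
  · have hkn : k ≤ n := by
      by_contra hc
      exact hoff ⟨by omega, hag⟩
    have h1 := H.anti hkn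
    have h2 : 0 ≤ dist (ppt a (n + 1) x) c := dist_nonneg
    have h3 := H.pos k
    linarith
  · exact (dist_ppt_gpt_ge' H hag).trans (dist_le_kernel h0)

theorem rpow_two_mul_neg {b : ℝ} (hb : 0 < b) (β : ℝ) : b ^ (-(2 * β)) = (b ^ β)⁻¹ ^ 2 := by
  rw [Real.rpow_neg hb.le, inv_pow, ← Real.rpow_natCast (b ^ β) 2, ← Real.rpow_mul hb.le]
  congr 2; push_cast; ring

theorem tm_sq_mul (H : Scale β a) (n : ℕ) : tm β a n ^ 2 * a n ^ (-(2 * β)) = 4 ^ n := by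
  have h1 : 0 < a n ^ β := Real.rpow_pos_of_pos (H.pos n) _
  rw [rpow_two_mul_neg (H.pos n), tm, mul_pow, inv_pow, mul_assoc,
    mul_inv_cancel₀ (by positivity), mul_one, ← pow_mul, mul_comm n 2, pow_mul]
  norm_num

theorem tm_succ_sq_mul (H : Scale β a) (n : ℕ) :
    tm β a (n + 1) ^ 2 * a n ^ (-(2 * β)) ≤ (1 / 16) ^ (n + 1) := by
  have h1 : 0 < a n ^ β := Real.rpow_pos_of_pos (H.pos n) _
  have h2 := pow_le_pow_left₀ (tm_pos H (n + 1)).le (tm_succ_le H n) 2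
  rw [rpow_two_mul_neg (H.pos n)]
  calc tm β a (n + 1) ^ 2 * (a n ^ β)⁻¹ ^ 2
      ≤ ((1 / 4) ^ (n + 1) * a n ^ β) ^ 2 * (a n ^ β)⁻¹ ^ 2 := by gcongr
    _ = ((1 / 4) ^ 2) ^ (n + 1) := by
        rw [mul_pow, mul_assoc, ← mul_pow (a n ^ β), mul_inv_cancel₀ h1.ne', one_pow, mul_one,
          ← pow_mul, ← pow_mul, mul_comm]
    _ = _ := by norm_num

theorem pow16_le (n : ℕ) : ((1 : ℝ) / 16) ^ n ≤ (1 / 2) ^ n := by gcongr; norm_num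

/-- The Poisson tail of `σ` seen from a cube of scale `a k` meeting the Cantor set is `O(2 ^ k)`. -/
theorem sigma_tail_le (H : Scale β a) {c : Plane} {h : ℝ} {k : ℕ} {x₀ : BinSeq}
    (h0 : gpt a x₀ ∈ cube c h) (hk : 3 / 4 * a k ≤ 2 * h) :
    ∫⁻ z, ENNReal.ofReal ((2 * h + dist z c) ^ (-(2 * β))) ∂(sigmaM β a) ≤
      ENNReal.ofReal (34 * 2 ^ k) := by
  have hterm : ∀ n, ENNReal.ofReal (tm β a n ^ 2) *
      ∫⁻ x in ppt a n ⁻¹' univ, ENNReal.ofReal ((2 * h + dist (ppt a n x) c) ^ (-(2 * β))) ∂coin ≤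
      (if n ∈ Finset.range (k + 1) then ENNReal.ofReal (2 ^ n) else 0) +
        16 * ENNReal.ofReal ((1 / 2) ^ n) := by
    intro n
    rw [preimage_univ, Measure.restrict_univ, ← lintegral_const_mul' _ _ ENNReal.ofReal_ne_top]
    calc _ ≤ ∫⁻ x, ({x | agree n x x₀}.indicator
            (fun _ => if n ∈ Finset.range (k + 1) then ENNReal.ofReal (4 ^ n) else 0) x +
            16 * ENNReal.ofReal ((1 / 2) ^ n)) ∂coin := ?_
      _ = _ := ?_
    · refine lintegral_mono fun x => ?_
      rw [← ENNReal.ofReal_mul (by positivity)]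
      by_cases hon : n ≤ k ∧ agree n x x₀
      · have hn : n ∈ Finset.range (k + 1) := Finset.mem_range.2 (by omega)
        rw [indicator_of_mem (show x ∈ {x | agree n x x₀} from hon.2), if_pos hn]
        refine le_add_right (ENNReal.ofReal_le_ofReal ?_)
        rw [← tm_sq_mul H n]
        refine mul_le_mul_of_nonneg_left ?_ (by positivity)
        exact Real.rpow_le_rpow_of_nonpos (H.pos n) (kernel_ge_on H h0 n x)
          (by linarith [H.bpos])
      · refine le_add_left ?_
        cases n with
        | zero => exact absurd ⟨Nat.zero_le _, fun i hi => absurd hi (Nat.not_lt_zero i)⟩ hon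
        | succ n =>
          rw [show (16 : ℝ≥0∞) = ENNReal.ofReal 16 by simp, ← ENNReal.ofReal_mul (by norm_num)]
          refine ENNReal.ofReal_le_ofReal ?_
          have hD := rpow_neg_le (N := 4) (H.pos n) (by linarith [H.bpos] : 0 ≤ 2 * β)
            (by push_cast; linarith [H.ble]) (kernel_ge_off H h0 hk hon)
          have h1 := mul_le_mul_of_nonneg_left hD (sq_nonneg (tm β a (n + 1)))
          have h2 := tm_succ_sq_mul H n
          have h3 := pow16_le (n + 1)
          norm_num at h1 h2 h3 ⊢
          linarith
    · rw [lintegral_add_right _ measurable_const, lintegral_indicator (measurableSet_agree n x₀),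
        setLIntegral_const, coin_agree, lintegral_const, measure_univ, mul_one]
      congr 1
      split_ifs
      · rw [← ENNReal.ofReal_mul (by positivity), ← mul_pow]; norm_num
      · simp
  have h1 := setLIntegral_sigma H MeasurableSet.univ (measurable_kernel c h (-(2 * β)))
  rw [Measure.restrict_univ] at h1
  rw [h1]
  refine (ENNReal.tsum_le_tsum hterm).trans ?_
  rw [ENNReal.tsum_add, ENNReal.tsum_mul_left, tsum_half, tsum_eq_sum (s := Finset.range (k + 1))
    (fun n hn => if_neg hn), Finset.sum_ite_mem, Finset.inter_self,
    ← ENNReal.ofReal_sum_of_nonneg (fun n _ => by positivity),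
    show (16 * 2 : ℝ≥0∞) = ENNReal.ofReal 32 by norm_num,
    ← ENNReal.ofReal_add (Finset.sum_nonneg fun n _ => by positivity) (by norm_num)]
  refine ENNReal.ofReal_le_ofReal ?_
  have h2 : ∑ n ∈ Finset.range (k + 1), (2 : ℝ) ^ n = 2 ^ (k + 1) - 1 := by
    rw [geom_sum_eq (by norm_num)]; norm_num
  have h3 : (1 : ℝ) ≤ 2 ^ k := one_le_pow₀ (by norm_num)
  rw [h2, pow_succ]
  linarith

/-- A cube with positive `ω`-mass meets the Cantor set at some scale `a k`; its mass is at most `2⁻ᵏ`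
and the tail of `σ` is `O(2 ^ k)`. -/
theorem muck_sigma_omega {α : ℝ} (H : Scale (2 - α) a) :
    muckA2 α (sigmaM (2 - α) a) (omegaM a) ≠ ⊤ := by
  refine ne_top_of_le_ne_top (b := ENNReal.ofReal 34) ENNReal.ofReal_ne_top ?_
  refine iSup_le fun c => iSup_le fun h => iSup_le fun hh => ?_
  refine (muck_term_le α c hh _ _).trans ?_
  rw [omega_apply H (measurableSet_cube c h)]
  rcases coin_eq_zero_or (gpt a ⁻¹' cube c h) with h0 | ⟨k, x₀, x₁, hx₀, hx₁, hag, hne, hall⟩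
  · simp [h0]
  · have hk := side_ge H hx₀ hx₁ hag hne
    have h1 : coin (gpt a ⁻¹' cube c h) ≤ ENNReal.ofReal ((1 / 2) ^ k) := by
      rw [← coin_agree k x₀]; exact measure_mono hall
    have h2 := (setLIntegral_le_lintegral (μ := sigmaM (2 - α) a) (cube c h)ᶜ _).trans
      (sigma_tail_le H hx₀ hk)
    refine (mul_le_mul' h2 h1).trans ?_
    rw [← ENNReal.ofReal_mul (by positivity), mul_assoc, ← mul_pow]
    norm_num

/-- Either `σ` does not charge the cube, or one selects a point mass of smallest generation in the
cube; all the others are separated from it by a distance comparable to the scale preceding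
their own. -/
theorem sigma_cube_cases (H : Scale β a) (c : Plane) (h : ℝ) :
    (∀ n x, ppt a n x ∉ cube c h) ∨ ∃ n₀ x₀, ppt a n₀ x₀ ∈ cube c h ∧
      ∀ n x, ppt a n x ∈ cube c h → ¬ (n = n₀ ∧ agree n x x₀) →
        ∃ m, n = m + 1 ∧ a m / 2 ≤ dist (ppt a n x) (ppt a n₀ x₀) := by
  classical
  by_cases hex : ∃ n, ∃ x, ppt a n x ∈ cube c h
  · right
    obtain ⟨x₀, hx₀⟩ := Nat.find_spec hex
    refine ⟨Nat.find hex, x₀, hx₀, fun n x hx hoff => ?_⟩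
    have hmin : Nat.find hex ≤ n := Nat.find_min' hex ⟨x, hx⟩
    cases n with
    | zero =>
      exact absurd ⟨(Nat.le_zero.1 hmin).symm, fun i hi => absurd hi (Nat.not_lt_zero i)⟩ hoff
    | succ m =>
      exact ⟨m, rfl, dist_ppt_ppt_ge H hmin fun hh => hoff ⟨hh.1.symm, hh.2⟩⟩
  · left
    push Not at hex
    exact hex

end kernels

/-! ### The dual Muckenhoupt constant -/

section muckDual

variable {β : ℝ} {a : ℕ → ℝ}

/-- The Poisson tail of `ω` at a cube containing a point mass of generation `n₀`. -/
theorem omega_tail_le (H : Scale β a) {c : Plane} {h : ℝ} {n₀ : ℕ} {x₀ : BinSeq}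
    (h0 : ppt a n₀ x₀ ∈ cube c h) :
    ENNReal.ofReal (tm β a n₀ ^ 2) * ENNReal.ofReal ((1 / 2) ^ n₀) *
      ∫⁻ x, ENNReal.ofReal ((2 * h + dist (gpt a x) c) ^ (-(2 * β))) ∂coin ≤ 17 := by
  rw [← ENNReal.ofReal_mul (by positivity), ← lintegral_const_mul' _ _ ENNReal.ofReal_ne_top]
  have hD : ∀ x, dist (ppt a n₀ x₀) (gpt a x) ≤ 2 * h + dist (gpt a x) c := fun x => by
    rw [dist_comm]; exact dist_le_kernel h0
  calc _ ≤ ∫⁻ x, ({x | agree n₀ x x₀}.indicator (fun _ => ENNReal.ofReal (2 ^ n₀)) x + 16) ∂coin := ?_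
    _ = 17 := ?_
  · refine lintegral_mono fun x => ?_
    rw [← ENNReal.ofReal_mul (by positivity)]
    by_cases hon : agree n₀ x x₀
    · rw [indicator_of_mem (show x ∈ {x | agree n₀ x x₀} from hon)]
      refine le_add_right (ENNReal.ofReal_le_ofReal ?_)
      have h1 : (2 * h + dist (gpt a x) c) ^ (-(2 * β)) ≤ a n₀ ^ (-(2 * β)) :=
        Real.rpow_le_rpow_of_nonpos (H.pos n₀) ((dist_ppt_gpt_ge H n₀ x₀ x).trans (hD x))
          (by linarith [H.bpos])
      calc _ ≤ tm β a n₀ ^ 2 * (1 / 2) ^ n₀ * a n₀ ^ (-(2 * β)) :=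
            mul_le_mul_of_nonneg_left h1 (by positivity)
        _ = (4 * (1 / 2)) ^ n₀ := by rw [mul_right_comm, tm_sq_mul H, mul_pow]
        _ = 2 ^ n₀ := by norm_num
    · refine le_add_left ?_
      cases n₀ with
      | zero => exact absurd (fun i hi => absurd hi (Nat.not_lt_zero i)) hon
      | succ n =>
        rw [show (16 : ℝ≥0∞) = ENNReal.ofReal 16 by simp]
        refine ENNReal.ofReal_le_ofReal ?_
        have h1 := rpow_neg_le (N := 4) (H.pos n) (by linarith [H.bpos] : 0 ≤ 2 * β)
          (by push_cast; linarith [H.ble])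
          ((dist_ppt_gpt_ge' H fun hh => hon hh.symm).trans (hD x))
        have h2 := mul_le_mul_of_nonneg_left h1 (sq_nonneg (tm β a (n + 1)))
        have h3 := tm_succ_sq_mul H n
        have h4 : ((1 : ℝ) / 16) ^ (n + 1) ≤ 1 := pow_le_one₀ (by norm_num) (by norm_num)
        have h5 : ((1 : ℝ) / 2) ^ (n + 1) ≤ 1 := pow_le_one₀ (by norm_num) (by norm_num)
        have h6 : tm β a (n + 1) ^ 2 * (2 * h + dist (gpt a x) c) ^ (-(2 * β)) ≤ 16 := by linarith
        have h7 : 0 ≤ (2 * h + dist (gpt a x) c) ^ (-(2 * β)) :=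
          Real.rpow_nonneg (le_trans dist_nonneg (hD x)) _
        calc _ = (1 / 2) ^ (n + 1) *
              (tm β a (n + 1) ^ 2 * (2 * h + dist (gpt a x) c) ^ (-(2 * β))) := by ring
          _ ≤ tm β a (n + 1) ^ 2 * (2 * h + dist (gpt a x) c) ^ (-(2 * β)) :=
              mul_le_of_le_one_left (by positivity) h5
          _ ≤ 16 := h6
  · rw [lintegral_add_right _ measurable_const, lintegral_indicator (measurableSet_agree n₀ x₀),
      setLIntegral_const, coin_agree, lintegral_const, measure_univ, mul_one,
      ← ENNReal.ofReal_mul (by positivity), ← mul_pow]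
    norm_num

theorem muck_omega_sigma {α : ℝ} (H : Scale (2 - α) a) :
    muckA2 α (omegaM a) (sigmaM (2 - α) a) ≠ ⊤ := by
  refine ne_top_of_le_ne_top (b := 529) (by simp) ?_
  refine iSup_le fun c => iSup_le fun h => iSup_le fun hh => ?_
  refine (muck_term_le α c hh _ _).trans ?_
  set J := ∫⁻ x, ENNReal.ofReal ((2 * h + dist (gpt a x) c) ^ (-(2 * (2 - α)))) ∂coin with hJ
  have hJ' : ∫⁻ z, ENNReal.ofReal ((2 * h + dist z c) ^ (-(2 * (2 - α))))
      ∂((omegaM a).restrict (cube c h)ᶜ) ≤ J := by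
    refine (setLIntegral_le_lintegral _ _).trans (le_of_eq ?_)
    have := setLIntegral_omega H MeasurableSet.univ (measurable_kernel c h (-(2 * (2 - α))))
    simpa using this
  refine (mul_le_mul_left hJ' _).trans ?_
  rw [sigma_apply H (measurableSet_cube c h)]
  rcases sigma_cube_cases H c h with hno | ⟨n₀, x₀, hx₀, hsep⟩
  · have : ∀ n, ppt a n ⁻¹' cube c h = ∅ := fun n => by
      ext x; simpa using hno n x
    simp [this]
  · have hterm : ∀ n, J * (ENNReal.ofReal (tm (2 - α) a n ^ 2) * coin (ppt a n ⁻¹' cube c h)) ≤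
        (if n = n₀ then 17 else 0) + 256 * ENNReal.ofReal ((1 / 2) ^ n) := by
      intro n
      by_cases hoth : ∃ x, ppt a n x ∈ cube c h ∧ ¬ (n = n₀ ∧ agree n x x₀)
      · -- A second point mass forces the side length to be comparable to the previous scale.
        refine le_add_left ?_
        obtain ⟨x, hx, hoff⟩ := hoth
        obtain ⟨m, rfl, hm⟩ := hsep n x hx hoff
        have hL : a m / 2 / 2 ≤ 2 * h := by linarith [dist_le_side hx₀ hx]
        have h1 : J ≤ ENNReal.ofReal (256 * a m ^ (-(2 * (2 - α)))) := by
          have hb : ∀ y, (2 * h + dist (gpt a y) c) ^ (-(2 * (2 - α))) ≤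
              256 * a m ^ (-(2 * (2 - α))) := by
            intro y
            have hs0 : 0 ≤ 2 * (2 - α) := by linarith [H.bpos]
            have hs4 : 2 * (2 - α) ≤ (4 : ℕ) := by push_cast; linarith [H.ble]
            have e1 := rpow_neg_le (N := 4) (half_pos (H.pos m)) hs0 hs4
              (hL.trans (le_add_of_nonneg_right (dist_nonneg (x := gpt a y) (y := c))))
            have e2 := rpow_neg_le (N := 4) (H.pos m) hs0 hs4 le_rfl
            norm_num at e1 e2 ⊢
            linarith
          calc J ≤ ∫⁻ _, ENNReal.ofReal (256 * a m ^ (-(2 * (2 - α)))) ∂coin :=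
                lintegral_mono fun y => ENNReal.ofReal_le_ofReal (hb y)
            _ = _ := by simp
        calc _ ≤ ENNReal.ofReal (256 * a m ^ (-(2 * (2 - α)))) *
              (ENNReal.ofReal (tm (2 - α) a (m + 1) ^ 2) * 1) := by
              gcongr; exact prob_le_one
          _ ≤ _ := by
              rw [mul_one, ← ENNReal.ofReal_mul (by have := H.pos m; positivity),
                show (256 : ℝ≥0∞) = ENNReal.ofReal 256 by simp, ← ENNReal.ofReal_mul (by norm_num)]
              refine ENNReal.ofReal_le_ofReal ?_
              have h2 := tm_succ_sq_mul H m
              have h3 := pow16_le (m + 1)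
              linarith
      · push Not at hoth
        by_cases hn : n = n₀
        · subst hn
          refine le_add_right ?_
          rw [if_pos rfl]
          refine le_trans ?_ (omega_tail_le H hx₀)
          rw [mul_comm J]
          gcongr
          rw [← coin_agree n x₀]
          exact measure_mono fun x hx => (hoth x hx).2
        · have : ppt a n ⁻¹' cube c h = ∅ := by
            ext x
            simp only [mem_preimage, mem_empty_iff_false, iff_false]
            exact fun hx => hn (hoth x hx).1
          simp [this]
    rw [← ENNReal.tsum_mul_left]
    refine (ENNReal.tsum_le_tsum hterm).trans ?_
    rw [ENNReal.tsum_add, ENNReal.tsum_mul_left, tsum_half, tsum_ite_eq]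
    norm_num

end muckDual

/-! ### Energy of `ω` against tails of `σ` -/

section energyForward

variable {β : ℝ} {a : ℕ → ℝ}

open scoped Classical in
/-- The contribution of one point mass of generation `n` to the gradient tail `a k * D ^ (-(1 + β))`
at a cube meeting the Cantor set at scale `a k`. Only the mass of generation `k` attached to the
cube itself contributes more than a geometrically small multiple of `tm β a n`. -/
theorem energy_kernel_le (H : Scale β a) {c : Plane} {h : ℝ} {k : ℕ} {x₀ : BinSeq}
    (h0 : gpt a x₀ ∈ cube c h) (hk : 3 / 4 * a k ≤ 2 * h) (n : ℕ) (x : BinSeq) :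
    tm β a n ^ 2 * (a k * (2 * h + dist (ppt a n x) c) ^ (-(1 + β))) ≤
      if n = k ∧ agree k x x₀ then 2 ^ k * tm β a k else 6 * tm β a n * (1 / 2) ^ n := by
  have hak := H.pos k
  have hh : 0 < 2 * h := by linarith
  set D := 2 * h + dist (ppt a n x) c with hD
  have hD0 : 0 < D := by positivity
  have hDb : 0 < D ^ (-β) := Real.rpow_pos_of_pos hD0 _
  have hsplit : D ^ (-(1 + β)) = D⁻¹ * D ^ (-β) := by
    rw [neg_add, Real.rpow_add hD0, Real.rpow_neg_one]
  have ht := tm_pos H n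
  have han := H.pos n
  by_cases hon : n ≤ k ∧ agree n x x₀
  · have hDn : a n ≤ D := kernel_ge_on H h0 n x
    have h1 : D ^ (-β) ≤ a n ^ (-β) :=
      Real.rpow_le_rpow_of_nonpos han hDn (by linarith [H.bpos])
    have h2 : tm β a n * a n ^ (-β) = 2 ^ n := by
      rw [tm, mul_assoc, ← Real.rpow_add han]; simp
    have h3 : D⁻¹ ≤ (a n)⁻¹ := inv_anti₀ han hDn
    have key : tm β a n ^ 2 * (a k * D ^ (-(1 + β))) ≤ tm β a n * 2 ^ n * (a k * (a n)⁻¹) := by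
      calc tm β a n ^ 2 * (a k * D ^ (-(1 + β)))
          = tm β a n ^ 2 * (a k * (D⁻¹ * D ^ (-β))) := by rw [hsplit]
        _ ≤ tm β a n ^ 2 * (a k * ((a n)⁻¹ * a n ^ (-β))) := by gcongr
        _ = tm β a n * (tm β a n * a n ^ (-β)) * (a k * (a n)⁻¹) := by ring
        _ = _ := by rw [h2]
    refine key.trans ?_
    by_cases hnk : n = k
    · subst hnk
      rw [if_pos ⟨rfl, hon.2⟩, mul_inv_cancel₀ han.ne']
      linarith
    · rw [if_neg fun hc => hnk hc.1]
      obtain ⟨j, rfl⟩ : ∃ j, k = j + 1 := ⟨k - 1, by omega⟩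
      have e1 : a (j + 1) * (a n)⁻¹ ≤ (1 / 4) ^ n := by
        rw [← div_eq_mul_inv, div_le_iff₀ han]
        have e2 := H.step j
        have e3 := H.anti (show n ≤ j by omega)
        have e4 : (4 : ℝ) ^ n ≤ 8 ^ (j + 1) :=
          (pow_le_pow_left₀ (by norm_num) (by norm_num) n).trans
            (pow_le_pow_right₀ (by norm_num) (by omega))
        calc a (j + 1) ≤ a j / 8 ^ (j + 1) := e2
          _ ≤ a n / 4 ^ n := by gcongr
          _ = _ := by rw [one_div, inv_pow]; ring
      calc tm β a n * 2 ^ n * (a (j + 1) * (a n)⁻¹) ≤ tm β a n * 2 ^ n * (1 / 4) ^ n := by gcongr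
        _ = tm β a n * (1 / 2) ^ n := by rw [mul_assoc, ← mul_pow]; norm_num
        _ ≤ 6 * tm β a n * (1 / 2) ^ n := by
            have : 0 < tm β a n * (1 / 2) ^ n := by positivity
            linarith
  · rw [if_neg fun hc => hon ⟨hc.1.le, by rw [hc.1]; exact hc.2⟩]
    cases n with
    | zero => exact absurd ⟨Nat.zero_le _, fun i hi => absurd hi (Nat.not_lt_zero i)⟩ hon
    | succ m =>
      have ham := H.pos m
      have h1 : D ^ (-β) ≤ 2 ^ 2 * a m ^ (-β) :=
        rpow_neg_le ham H.bpos.le (by push_cast; exact H.ble) (kernel_ge_off H h0 hk hon)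
      have h2 : a k * D⁻¹ ≤ 4 / 3 := by
        rw [← div_eq_mul_inv, div_le_iff₀ hD0]
        have : 0 ≤ dist (ppt a (m + 1) x) c := dist_nonneg
        linarith
      have h3 : tm β a (m + 1) * a m ^ (-β) ≤ (1 / 2) ^ (m + 1) := by
        calc tm β a (m + 1) * a m ^ (-β) ≤ (1 / 4) ^ (m + 1) * a m ^ β * a m ^ (-β) := by
              gcongr; exact tm_succ_le H m
          _ = (1 / 4) ^ (m + 1) := by rw [mul_assoc, ← Real.rpow_add ham]; simp
          _ ≤ _ := by gcongr; norm_num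
      calc tm β a (m + 1) ^ 2 * (a k * D ^ (-(1 + β)))
          = tm β a (m + 1) ^ 2 * ((a k * D⁻¹) * D ^ (-β)) := by rw [hsplit]; ring
        _ ≤ tm β a (m + 1) ^ 2 * (4 / 3 * (2 ^ 2 * a m ^ (-β))) := by gcongr
        _ = 16 / 3 * tm β a (m + 1) * (tm β a (m + 1) * a m ^ (-β)) := by ring
        _ ≤ 16 / 3 * tm β a (m + 1) * (1 / 2) ^ (m + 1) := by gcongr
        _ ≤ _ := by gcongr; norm_num

open scoped Classical in
/-- The gradient tail of `σ` restricted to a large cube `cube c' h'`, seen from a small cube meeting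
the Cantor set at scale `a k`, is at most `12 * σ(cube c' h') ^ (1/2)` apart from the contribution
of one single point mass. -/
theorem energy_tail_le (H : Scale β a) {c c' : Plane} {h h' : ℝ} {k : ℕ} {x₀ : BinSeq}
    (h0 : gpt a x₀ ∈ cube c h) (hk : 3 / 4 * a k ≤ 2 * h) :
    ENNReal.ofReal (a k) * ∫⁻ z in cube c' h', ENNReal.ofReal ((2 * h + dist z c) ^ (-(1 + β)))
        ∂(sigmaM β a) ≤
      12 * sigmaM β a (cube c' h') ^ (1 / 2 : ℝ) +
        if ppt a k x₀ ∈ cube c' h' then ENNReal.ofReal (tm β a k) else 0 := by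
  rw [setLIntegral_sigma H (measurableSet_cube c' h') (measurable_kernel c h _),
    ← ENNReal.tsum_mul_left]
  set e : ℝ≥0∞ := if ppt a k x₀ ∈ cube c' h' then 1 else 0 with he
  have hq : ∀ n, ENNReal.ofReal (tm β a n) * coin (ppt a n ⁻¹' cube c' h') ≤
      sigmaM β a (cube c' h') ^ (1 / 2 : ℝ) := by
    intro n
    have h1 : (ENNReal.ofReal (tm β a n) * coin (ppt a n ⁻¹' cube c' h')) ^ (2 : ℝ) ≤
        sigmaM β a (cube c' h') := by
      rw [sigma_apply H (measurableSet_cube c' h'), ENNReal.rpow_two, mul_pow,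
        ← ENNReal.ofReal_pow (tm_pos H n).le]
      refine le_trans ?_ (ENNReal.le_tsum n)
      gcongr
      rw [sq]
      exact mul_le_of_le_one_left' prob_le_one
    calc _ = ((ENNReal.ofReal (tm β a n) * coin (ppt a n ⁻¹' cube c' h')) ^ (2 : ℝ)) ^
          (1 / 2 : ℝ) := by rw [← ENNReal.rpow_mul]; norm_num
      _ ≤ _ := ENNReal.rpow_le_rpow h1 (by norm_num)
  have hterm : ∀ n, ENNReal.ofReal (a k) * (ENNReal.ofReal (tm β a n ^ 2) *
      ∫⁻ x in ppt a n ⁻¹' cube c' h',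
        ENNReal.ofReal ((2 * h + dist (ppt a n x) c) ^ (-(1 + β))) ∂coin) ≤
      6 * sigmaM β a (cube c' h') ^ (1 / 2 : ℝ) * ENNReal.ofReal ((1 / 2) ^ n) +
        if n = k then ENNReal.ofReal (tm β a k) * e else 0 := by
    intro n
    have ht := tm_pos H n
    have hak := H.pos k
    have hP := measurable_ppt H n (measurableSet_cube c' h')
    rw [← mul_assoc, ← ENNReal.ofReal_mul hak.le,
      ← lintegral_const_mul' _ _ ENNReal.ofReal_ne_top]
    calc _ ≤ ∫⁻ x in ppt a n ⁻¹' cube c' h', (ENNReal.ofReal (6 * tm β a n * (1 / 2) ^ n) +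
            {x | agree k x x₀}.indicator
              (fun _ => if n = k then ENNReal.ofReal (2 ^ k * tm β a k) * e else 0) x) ∂coin := ?_
      _ ≤ _ := ?_
    · refine setLIntegral_mono' hP fun x hx => ?_
      rw [← ENNReal.ofReal_mul (by positivity)]
      have hb := energy_kernel_le H h0 hk n x
      rw [← mul_assoc, mul_comm (_ ^ 2)] at hb
      refine (ENNReal.ofReal_le_ofReal hb).trans ?_
      by_cases hd : n = k ∧ agree k x x₀
      · rw [if_pos hd]
        refine le_add_left ?_
        obtain ⟨rfl, hag⟩ := hd
        have : e = 1 := by rw [he, if_pos]; rw [← ppt_congr hag]; exact hx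
        rw [indicator_of_mem (show x ∈ {x | agree n x x₀} from hag), if_pos rfl, this, mul_one]
      · rw [if_neg hd]
        exact le_add_right le_rfl
    · rw [lintegral_add_left measurable_const, setLIntegral_const]
      refine add_le_add ?_ ?_
      · rw [ENNReal.ofReal_mul (by positivity), ENNReal.ofReal_mul (by norm_num)]
        have := hq n
        calc _ = 6 * (ENNReal.ofReal (tm β a n) * coin (ppt a n ⁻¹' cube c' h')) *
              ENNReal.ofReal ((1 / 2) ^ n) := by
              rw [show ENNReal.ofReal 6 = 6 by simp]; ring
          _ ≤ _ := by gcongr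
      · refine (setLIntegral_le_lintegral _ _).trans ?_
        rw [lintegral_indicator (measurableSet_agree k x₀), setLIntegral_const, coin_agree]
        split_ifs
        · rw [mul_right_comm, ← ENNReal.ofReal_mul (by have := tm_pos H k; positivity),
            mul_right_comm, ← mul_pow]
          norm_num
        · simp
  refine (ENNReal.tsum_le_tsum hterm).trans ?_
  rw [ENNReal.tsum_add, ENNReal.tsum_mul_left, tsum_half, tsum_ite_eq, he, mul_ite, mul_one,
    mul_zero]
  refine add_le_add (le_of_eq ?_) le_rfl
  ring

theorem add_sq_le_four (x y : ℝ≥0∞) : (x + y) ^ 2 ≤ 4 * (x ^ 2 + y ^ 2) := by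
  rcases le_total x y with hxy | hxy
  · calc (x + y) ^ 2 ≤ (y + y) ^ 2 := by gcongr
      _ = 4 * y ^ 2 := by ring
      _ ≤ _ := by gcongr; exact le_add_self
  · calc (x + y) ^ 2 ≤ (x + x) ^ 2 := by gcongr
      _ = 4 * x ^ 2 := by ring
      _ ≤ _ := by gcongr; exact le_self_add

/-- For the point masses lying in `Q` among those attached to the initial segments of the word `x`,
the sum of the total masses of their generations. Its mean over all words is `σ Q`. -/
def pathMass (β : ℝ) (a : ℕ → ℝ) (Q : Set Plane) (x : BinSeq) : ℝ≥0∞ :=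
  ∑' n, (ppt a n ⁻¹' Q).indicator (fun _ => ENNReal.ofReal (tm β a n ^ 2)) x

theorem lintegral_pathMass (H : Scale β a) {Q : Set Plane} (hQ : MeasurableSet Q) :
    ∫⁻ x, pathMass β a Q x ∂coin = sigmaM β a Q := by
  unfold pathMass
  rw [lintegral_tsum fun n =>
    (measurable_const.indicator (measurable_ppt H n hQ)).aemeasurable, sigma_apply H hQ]
  refine tsum_congr fun n => ?_
  rw [lintegral_indicator (measurable_ppt H n hQ), setLIntegral_const]

/-- The summand of the energy constant belonging to one subcube of `Q`. -/
theorem energy_term_le {α : ℝ} (H : Scale (2 - α) a) (c' : Plane) (h' : ℝ) (c : Plane) (h : ℝ) :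
    (stdPoisson α c h ((sigmaM (2 - α) a).restrict (cube c' h')) / ENNReal.ofReal (2 * h)) ^ 2 *
        ∫⁻ x in cube c h, ENNReal.ofReal (dist x (mMean (omegaM a) (cube c h)) ^ 2) ∂(omegaM a) ≤
      2304 * sigmaM (2 - α) a (cube c' h') * coin (gpt a ⁻¹' cube c h) +
        16 * ∫⁻ x in gpt a ⁻¹' cube c h, pathMass (2 - α) a (cube c' h') x ∂coin := by
  classical
  have hP := measurable_gpt H (measurableSet_cube c h)
  have := isProb_omega H
  rcases coin_eq_zero_or (gpt a ⁻¹' cube c h) with hz | ⟨k, x₀, x₁, hx₀, hx₁, hag, hne, hall⟩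
  · have : (omegaM a).restrict (cube c h) = 0 := by
      rw [Measure.restrict_eq_zero, omega_apply H (measurableSet_cube c h), hz]
    rw [this, lintegral_zero_measure, mul_zero]
    exact zero_le
  · have hk := side_ge H hx₀ hx₁ hag hne
    have hh := pos_of_mem hx₀
    have hak := H.pos k
    rw [std_div_eq α c hh]
    have hV : ∫⁻ x in cube c h,
        ENNReal.ofReal (dist x (mMean (omegaM a) (cube c h)) ^ 2) ∂(omegaM a) ≤
        4 * ENNReal.ofReal (a k) ^ 2 * coin (gpt a ⁻¹' cube c h) := by
      refine (variance_le (omegaM a) c h (gpt a x₀)).trans ?_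
      rw [setLIntegral_omega H (measurableSet_cube c h) (by fun_prop), ← setLIntegral_const]
      refine setLIntegral_mono' hP fun x hx => ?_
      rw [show (4 : ℝ≥0∞) = ENNReal.ofReal 4 by simp, ← ENNReal.ofReal_pow hak.le,
        ← ENNReal.ofReal_mul (by norm_num)]
      refine ENNReal.ofReal_le_ofReal ?_
      have := pow_le_pow_left₀ dist_nonneg (dist_gpt_le H (hall x hx)) 2
      linarith
    have hT := energy_tail_le H (c' := c') (h' := h') hx₀ hk
    rw [show 1 + (2 - α) = 3 - α by ring] at hT
    set K := ∫⁻ z in cube c' h', ENNReal.ofReal ((2 * h + dist z c) ^ (-(3 - α)))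
      ∂(sigmaM (2 - α) a) with hK
    set e : ℝ≥0∞ := if ppt a k x₀ ∈ cube c' h' then ENNReal.ofReal (tm (2 - α) a k) else 0 with he
    set s := sigmaM (2 - α) a (cube c' h') with hs
    have hs2 : (s ^ (1 / 2 : ℝ)) ^ 2 = s := by
      rw [← ENNReal.rpow_two, ← ENNReal.rpow_mul]; norm_num
    have hG : (ENNReal.ofReal (a k) * K) ^ 2 ≤ 576 * s + 4 * e ^ 2 := by
      calc _ ≤ (12 * s ^ (1 / 2 : ℝ) + e) ^ 2 := by gcongr
        _ ≤ 4 * ((12 * s ^ (1 / 2 : ℝ)) ^ 2 + e ^ 2) := add_sq_le_four _ _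
        _ = _ := by rw [mul_pow, hs2]; ring
    have hE : e ^ 2 * coin (gpt a ⁻¹' cube c h) ≤
        ∫⁻ x in gpt a ⁻¹' cube c h, pathMass (2 - α) a (cube c' h') x ∂coin := by
      rw [← setLIntegral_const]
      refine setLIntegral_mono' hP fun x hx => ?_
      refine le_trans ?_ (ENNReal.le_tsum k)
      rw [he]
      split_ifs with hm
      · rw [indicator_of_mem, ENNReal.ofReal_pow (tm_pos H k).le]
        rw [mem_preimage, ppt_congr (hall x hx)]
        exact hm
      · simp
    calc K ^ 2 * _ ≤ K ^ 2 * (4 * ENNReal.ofReal (a k) ^ 2 * coin (gpt a ⁻¹' cube c h)) := by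
          gcongr
      _ = 4 * (ENNReal.ofReal (a k) * K) ^ 2 * coin (gpt a ⁻¹' cube c h) := by ring
      _ ≤ 4 * (576 * s + 4 * e ^ 2) * coin (gpt a ⁻¹' cube c h) := by gcongr
      _ = 2304 * s * coin (gpt a ⁻¹' cube c h) + 16 * (e ^ 2 * coin (gpt a ⁻¹' cube c h)) := by
          ring
      _ ≤ _ := by gcongr

theorem energy_sigma_omega {α : ℝ} (H : Scale (2 - α) a) :
    energyConst α (sigmaM (2 - α) a) (omegaM a) ≠ ⊤ := by
  refine ne_top_of_le_ne_top (b := 2320) (by simp) ?_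
  refine iSup_le fun c => iSup_le fun h => iSup_le fun _ => iSup_le fun cr => iSup_le fun hr =>
    iSup_le fun _ => iSup_le fun _ => iSup_le fun hdisj => iSup_le fun _ => ?_
  set s := sigmaM (2 - α) a (cube c h) with hs
  have hm : ∀ r, MeasurableSet (gpt a ⁻¹' cube (cr r) (hr r)) := fun r =>
    measurable_gpt H (measurableSet_cube _ _)
  have hd : Pairwise (Function.onFun Disjoint fun r => gpt a ⁻¹' cube (cr r) (hr r)) :=
    fun i j hij => (hdisj hij).preimage _
  have hsum : ∑' r, (stdPoisson α (cr r) (hr r) ((sigmaM (2 - α) a).restrict (cube c h)) /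
      ENNReal.ofReal (2 * hr r)) ^ 2 * ∫⁻ x in cube (cr r) (hr r),
        ENNReal.ofReal (dist x (mMean (omegaM a) (cube (cr r) (hr r))) ^ 2) ∂(omegaM a) ≤
      2320 * s := by
    refine (ENNReal.tsum_le_tsum fun r => energy_term_le H c h (cr r) (hr r)).trans ?_
    rw [ENNReal.tsum_add, ENNReal.tsum_mul_left, ENNReal.tsum_mul_left,
      ← measure_iUnion hd hm, ← lintegral_iUnion hm hd]
    calc _ ≤ 2304 * s * 1 + 16 * ∫⁻ x, pathMass (2 - α) a (cube c h) x ∂coin := by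
          gcongr
          · exact prob_le_one
          · exact Measure.restrict_le_self
      _ = 2320 * s := by
          rw [lintegral_pathMass H (measurableSet_cube c h), ← hs]; ring
  calc s⁻¹ * _ ≤ s⁻¹ * (2320 * s) := by gcongr
    _ = 2320 * (s⁻¹ * s) := by ring
    _ ≤ 2320 * 1 := by gcongr; exact ENNReal.inv_mul_le_one s
    _ = 2320 := mul_one _

end energyForward

/-! ### Energy of `σ` against tails of `ω` -/

section energyDual

variable {β : ℝ} {a : ℕ → ℝ}

/-- The image of the coin tossing measure on the point masses, with generation `n` given total mass
`2⁻ⁿ`. The variance of `σ` in small cubes is measured against it. -/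
def auxM (a : ℕ → ℝ) : Measure Plane :=
  Measure.sum fun n => ENNReal.ofReal ((1 / 2) ^ n) • coin.map (ppt a n)

theorem auxM_apply (H : Scale β a) {S : Set Plane} (hS : MeasurableSet S) :
    auxM a S = ∑' n, ENNReal.ofReal ((1 / 2) ^ n) * coin (ppt a n ⁻¹' S) := by
  rw [auxM, Measure.sum_apply _ hS]
  refine tsum_congr fun n => ?_
  rw [Measure.smul_apply, Measure.map_apply (measurable_ppt H n) hS, smul_eq_mul]

theorem auxM_le (H : Scale β a) (S : Set Plane) : auxM a S ≤ 2 := by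
  refine (measure_mono (subset_univ S)).trans ?_
  rw [auxM_apply H MeasurableSet.univ, ← tsum_half]
  refine ENNReal.tsum_le_tsum fun n => ?_
  exact mul_le_of_le_one_right' prob_le_one

/-- Contribution to the variance of a point mass other than the reference one: the squared distance
is compensated by the side length, and the gain comes from the distance to the reference mass. -/
theorem variance_term_le (H : Scale β a) {m : ℕ} {L d : ℝ} (hd : a m / 2 ≤ d) (hdL : d ≤ 2 * L) :
    tm β a (m + 1) ^ 2 * ((L ^ (-(1 + β))) ^ 2 * d ^ 2) ≤ 1024 * (1 / 2) ^ (m + 1) := by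
  have ham := H.pos m
  have hL : 0 < L := by linarith
  have hLm : a m / 2 / 2 ≤ L := by linarith
  have hs0 : 0 ≤ 2 * β := by linarith [H.bpos]
  have hs4 : 2 * β ≤ (4 : ℕ) := by push_cast; linarith [H.ble]
  have e1 := rpow_neg_le (N := 4) (half_pos ham) hs0 hs4 hLm
  have e2 := rpow_neg_le (N := 4) ham hs0 hs4 le_rfl
  have e3 : (L ^ (-(1 + β))) ^ 2 = (L ^ 2)⁻¹ * L ^ (-(2 * β)) := by
    rw [← Real.rpow_natCast (L ^ _) 2, ← Real.rpow_mul hL.le, ← Real.rpow_natCast L 2,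
      ← Real.rpow_neg hL.le, ← Real.rpow_add hL]
    congr 1; push_cast; ring
  have e4 : (L ^ 2)⁻¹ * d ^ 2 ≤ 4 := by
    rw [inv_mul_le_iff₀ (by positivity)]
    nlinarith [pow_le_pow_left₀ (by linarith : 0 ≤ d) hdL 2]
  have e5 : L ^ (-(2 * β)) ≤ 256 * a m ^ (-(2 * β)) := by
    norm_num at e1 e2 ⊢; linarith
  have h2 := tm_succ_sq_mul H m
  have h3 := pow16_le (m + 1)
  have hLp : 0 < L ^ (-(2 * β)) := Real.rpow_pos_of_pos hL _
  calc tm β a (m + 1) ^ 2 * ((L ^ (-(1 + β))) ^ 2 * d ^ 2)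
      = tm β a (m + 1) ^ 2 * (L ^ (-(2 * β)) * ((L ^ 2)⁻¹ * d ^ 2)) := by rw [e3]; ring
    _ ≤ tm β a (m + 1) ^ 2 * (256 * a m ^ (-(2 * β)) * 4) := by gcongr
    _ = 1024 * (tm β a (m + 1) ^ 2 * a m ^ (-(2 * β))) := by ring
    _ ≤ _ := by linarith

/-- The summand of the dual energy constant belonging to one subcube of `Q`. -/
theorem energyDual_term_le {α : ℝ} (H : Scale (2 - α) a) (Q : Set Plane) (c : Plane) (h : ℝ) :
    (stdPoisson α c h ((omegaM a).restrict Q) / ENNReal.ofReal (2 * h)) ^ 2 *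
        ∫⁻ x in cube c h, ENNReal.ofReal (dist x (mMean (sigmaM (2 - α) a) (cube c h)) ^ 2)
          ∂(sigmaM (2 - α) a) ≤
      1024 * omegaM a Q ^ 2 * auxM a (cube c h) := by
  have hS := measurableSet_cube c h
  have := isFinite_sigma H
  rcases sigma_cube_cases H c h with hno | ⟨n₀, x₀, hx₀, hsep⟩
  · have hz : (sigmaM (2 - α) a).restrict (cube c h) = 0 := by
      rw [Measure.restrict_eq_zero, sigma_apply H hS]
      have : ∀ n, ppt a n ⁻¹' cube c h = ∅ := fun n => by
        ext x; simpa using hno n x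
      simp [this]
    rw [hz, lintegral_zero_measure, mul_zero]
    exact zero_le
  · have hh := pos_of_mem hx₀
    have hh2 : 0 < 2 * h := by linarith
    rw [std_div_eq α c hh]
    set K : ℝ≥0∞ := ENNReal.ofReal ((2 * h) ^ (-(3 - α))) with hK
    have hKle : ∫⁻ x in Q, ENNReal.ofReal ((2 * h + dist x c) ^ (-(3 - α))) ∂(omegaM a) ≤
        K * omegaM a Q := by
      rw [← setLIntegral_const]
      refine lintegral_mono fun x => ENNReal.ofReal_le_ofReal ?_
      exact Real.rpow_le_rpow_of_nonpos hh2 (by linarith [dist_nonneg (x := x) (y := c)])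
        (by linarith [H.bpos])
    have hV : K ^ 2 * ∫⁻ x in cube c h, ENNReal.ofReal (dist x (ppt a n₀ x₀) ^ 2)
        ∂(sigmaM (2 - α) a) ≤ 1024 * auxM a (cube c h) := by
      rw [setLIntegral_sigma H hS (by fun_prop), auxM_apply H hS, ← ENNReal.tsum_mul_left,
        ← ENNReal.tsum_mul_left]
      refine ENNReal.tsum_le_tsum fun n => ?_
      rw [mul_left_comm, ← lintegral_const_mul' _ _ (by simp [hK]),
        ← lintegral_const_mul' _ _ ENNReal.ofReal_ne_top, ← mul_assoc, ← setLIntegral_const]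
      refine setLIntegral_mono' (measurable_ppt H n hS) fun x hx => ?_
      by_cases hoff : n = n₀ ∧ agree n x x₀
      · obtain ⟨rfl, hag⟩ := hoff
        simp [ppt_congr hag]
      · obtain ⟨m, rfl, hm⟩ := hsep n x hx hoff
        rw [hK, ← ENNReal.ofReal_pow (Real.rpow_nonneg hh2.le _),
          ← ENNReal.ofReal_mul (by positivity), ← ENNReal.ofReal_mul (by positivity),
          show (1024 : ℝ≥0∞) = ENNReal.ofReal 1024 by simp, ← ENNReal.ofReal_mul (by norm_num)]
        refine ENNReal.ofReal_le_ofReal ?_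
        have := variance_term_le H hm (dist_le_side hx₀ hx)
        rwa [show 1 + (2 - α) = 3 - α by ring] at this
    calc _ ≤ (K * omegaM a Q) ^ 2 * ∫⁻ x in cube c h, ENNReal.ofReal (dist x (ppt a n₀ x₀) ^ 2)
          ∂(sigmaM (2 - α) a) := by
          exact mul_le_mul' (pow_le_pow_left' hKle 2)
            (variance_le (sigmaM (2 - α) a) c h (ppt a n₀ x₀))
      _ = omegaM a Q ^ 2 * (K ^ 2 * ∫⁻ x in cube c h, ENNReal.ofReal (dist x (ppt a n₀ x₀) ^ 2)
          ∂(sigmaM (2 - α) a)) := by ring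
      _ ≤ omegaM a Q ^ 2 * (1024 * auxM a (cube c h)) := by gcongr
      _ = _ := by ring

theorem energy_omega_sigma {α : ℝ} (H : Scale (2 - α) a) :
    energyConst α (omegaM a) (sigmaM (2 - α) a) ≠ ⊤ := by
  refine ne_top_of_le_ne_top (b := 2048) (by simp) ?_
  refine iSup_le fun c => iSup_le fun h => iSup_le fun _ => iSup_le fun cr => iSup_le fun hr =>
    iSup_le fun _ => iSup_le fun _ => iSup_le fun hdisj => iSup_le fun _ => ?_
  have := isProb_omega H
  set w := omegaM a (cube c h) with hw
  have hw1 : w ≤ 1 := prob_le_one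
  calc w⁻¹ * _ ≤ w⁻¹ * ∑' r, 1024 * w ^ 2 * auxM a (cube (cr r) (hr r)) := by
        refine mul_le_mul_right (ENNReal.tsum_le_tsum fun r => ?_) _
        exact energyDual_term_le H (cube c h) (cr r) (hr r)
    _ = w⁻¹ * (1024 * w ^ 2 * auxM a (⋃ r, cube (cr r) (hr r))) := by
        rw [ENNReal.tsum_mul_left, measure_iUnion hdisj fun r => measurableSet_cube _ _]
    _ ≤ w⁻¹ * (1024 * w ^ 2 * 2) := by
        gcongr
        exact auxM_le H _
    _ = 2048 * ((w⁻¹ * w) * w) := by ring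
    _ ≤ 2048 * (1 * 1) := by
        gcongr
        exact ENNReal.inv_mul_le_one w
    _ = 2048 := by norm_num

end energyDual

/-! ### Off-testing of the Riesz transforms -/

section riesz

variable {β : ℝ} {a : ℕ → ℝ}

theorem gpt_mem (H : Scale β a) (x : BinSeq) : gpt a x ∈ cube !₂[4, 0] 4 := by
  have h0 : ht a (fun _ => false) = 0 := by simp [ht, dig]
  have h1 := ht_close H (n := 0) (x := x) (y := fun _ => false)
    fun i hi => absurd hi (Nat.not_lt_zero i)
  rw [h0, sub_zero, H.zero, abs_le] at h1
  intro i
  fin_cases i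
  · norm_num [gpt]
  · simp only [gpt, Fin.mk_one, PiLp.toLp_apply, Matrix.cons_val_one, Matrix.cons_val_fin_one]
    constructor <;> linarith [h1.1, h1.2]

theorem ppt_notMem (H : Scale β a) (n : ℕ) (x : BinSeq) : ppt a n x ∈ (cube !₂[4, 0] 4)ᶜ := by
  intro h
  have h1 := (h 0).1
  simp only [ppt_zero, Matrix.cons_val_zero] at h1
  linarith [H.pos n]

/-- Every component of the displacement from a point mass to its own piece of the Cantor set is
positive and comparable to the scale: this rules out cancellation. -/
theorem coord_ge (H : Scale β a) {n : ℕ} {x y : BinSeq} (h : agree n y x) (m : Fin 2) :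
    a n ≤ gpt a y m - ppt a n x m := by
  fin_cases m
  · simp
  · have h1 : ht a (tr n x) ≤ ht a y := by
      refine ht_mono H fun i => ?_
      by_cases hi : i < n
      · simp [tr, hi, h i hi]
      · simpa [tr, hi, dig] using dig_nonneg (y i)
    simp only [Fin.mk_one, gpt_one, ppt_one]
    linarith

theorem dist_on_le (H : Scale β a) {n : ℕ} {x y : BinSeq} (h : agree n y x) :
    dist (ppt a n x) (gpt a y) ≤ 4 * a n := by
  have h1 := ht_close H ((agree_tr n x).trans h.symm)
  have h2 := dist_le_coord (ppt a n x) (gpt a y)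
  simp only [ppt_zero, gpt_zero, ppt_one, gpt_one, sub_zero, abs_neg, abs_of_pos (H.pos n)] at h2
  have h3 : |ht a (tr n x) - a n - ht a y| ≤ 3 * a n := by
    rw [abs_le] at h1 ⊢
    constructor <;> linarith [h1.1, h1.2, H.pos n]
  linarith

/-- The Riesz kernel is dominated by the fractional integral kernel. -/
theorem riesz_kernel_abs_le (α : ℝ) (m : Fin 2) {z w : Plane} (h : 0 < dist z w) :
    |(w m - z m) * dist z w ^ (α - 3)| ≤ dist z w ^ (-(2 - α)) := by
  have h1 : |w m - z m| ≤ dist z w := by rw [abs_sub_comm]; exact coord_le_dist z w m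
  have h2 : 0 < dist z w ^ (α - 3) := Real.rpow_pos_of_pos h _
  rw [abs_mul, abs_of_pos h2]
  calc _ ≤ dist z w * dist z w ^ (α - 3) := by gcongr
    _ = dist z w ^ (1 + (α - 3)) := by rw [Real.rpow_add h, Real.rpow_one]
    _ = _ := by congr 1; ring

/-- The Riesz transform of `ω` at a point mass of generation `n` is at least a constant times
`2⁻ⁿ * a n ^ (-(2 - α))`: the attached piece of the Cantor set contributes this much, and the rest
of `ω` is too far away to cancel it. -/
theorem riesz_inner_ge {α : ℝ} (H : Scale (2 - α) a) (m : Fin 2) {n : ℕ} (hn : 5 ≤ n)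
    (x : BinSeq) :
    1 / 128 ≤ tm (2 - α) a n * ∫ t in cube !₂[4, 0] 4,
      (t m - ppt a n x m) * dist (ppt a n x) t ^ (α - 3) ∂(omegaM a) := by
  have han := H.pos n
  set p := ppt a n x with hp
  have hmeas : Measurable fun t : Plane => (t m - p m) * dist p t ^ (α - 3) := by
    have h1 : Measurable fun t : Plane => dist p t := by fun_prop
    have h2 : Measurable fun t : Plane => t m - p m := by fun_prop
    exact h2.mul (h1.pow_const _)
  have huniv : gpt a ⁻¹' cube !₂[4, 0] 4 = univ := eq_univ_of_forall fun y => gpt_mem H y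
  rw [omegaM, setIntegral_map (measurableSet_cube _ _) hmeas.aestronglyMeasurable
    (measurable_gpt H).aemeasurable, huniv, Measure.restrict_univ]
  set f : BinSeq → ℝ := fun y => (gpt a y m - p m) * dist p (gpt a y) ^ (α - 3) with hf
  have hpos : ∀ y, 0 < dist p (gpt a y) := fun y => han.trans_le (dist_ppt_gpt_ge H n x y)
  have hfint : Integrable f coin := by
    refine Integrable.of_bound (hmeas.comp (measurable_gpt H)).aestronglyMeasurable
      (a n ^ (-(2 - α))) (ae_of_all _ fun y => ?_)
    refine (riesz_kernel_abs_le α m (hpos y)).trans ?_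
    exact Real.rpow_le_rpow_of_nonpos han (dist_ppt_gpt_ge H n x y) (by linarith [H.bpos])
  set B := a n ^ (-(2 - α)) with hB
  have hB0 : 0 < B := Real.rpow_pos_of_pos han _
  have hlow : ∀ y, {y | agree n y x}.indicator (fun _ => B / 64) y - 4 * (1 / 8) ^ n * B ≤ f y := by
    intro y
    by_cases hag : agree n y x
    · rw [indicator_of_mem (show y ∈ {y | agree n y x} from hag)]
      have h1 := coord_ge H hag m
      have h2 : (4 * a n) ^ (α - 3) ≤ dist p (gpt a y) ^ (α - 3) :=
        Real.rpow_le_rpow_of_nonpos (hpos y) (dist_on_le H hag) (by linarith [H.bpos])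
      have h3 : (1 : ℝ) / 64 ≤ 4 ^ (α - 3) := by
        have : (4 : ℝ) ^ (-3 : ℝ) ≤ 4 ^ (α - 3) :=
          Real.rpow_le_rpow_of_exponent_le (by norm_num) (by linarith [H.ble])
        refine le_trans (le_of_eq ?_) this
        rw [Real.rpow_neg (by norm_num)]
        norm_num
      have h4 : B / 64 ≤ f y := by
        calc B / 64 = 1 / 64 * (a n * a n ^ (α - 3)) := by
              rw [← Real.rpow_one_add' han.le (by linarith [H.bpos]), hB,
                show 1 + (α - 3) = -(2 - α) by ring]
              ring
          _ ≤ 4 ^ (α - 3) * (a n * a n ^ (α - 3)) := by gcongr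
          _ = a n * (4 * a n) ^ (α - 3) := by rw [Real.mul_rpow (by norm_num) han.le]; ring
          _ ≤ f y := mul_le_mul h1 h2 (by positivity) (han.le.trans h1)
      have h5 : 0 ≤ 4 * (1 / 8) ^ n * B := by positivity
      linarith
    · rw [indicator_of_notMem (show y ∉ {y | agree n y x} from hag), zero_sub]
      obtain ⟨j, rfl⟩ : ∃ j, n = j + 1 := ⟨n - 1, by omega⟩
      have haj := H.pos j
      have h1 : |f y| ≤ 2 ^ 2 * a j ^ (-(2 - α)) :=
        (riesz_kernel_abs_le α m (hpos y)).trans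
          (rpow_neg_le haj H.bpos.le (by push_cast; exact H.ble)
            (dist_ppt_gpt_ge' H fun hh => hag hh.symm))
      have h2 : a j ^ (-(2 - α)) ≤ (1 / 8) ^ (j + 1) * B := by
        rw [hB, Real.rpow_neg haj.le, Real.rpow_neg han.le]
        have h3 := H.stepb j
        have e1 : 0 < a (j + 1) ^ (2 - α) := Real.rpow_pos_of_pos han _
        have e2 : 0 < a j ^ (2 - α) := Real.rpow_pos_of_pos haj _
        rw [← div_eq_mul_inv, le_div_iff₀ e1, inv_mul_le_iff₀ e2, one_div, inv_pow]
        exact h3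
      have h3 := neg_abs_le (f y)
      linarith
  have hint : ∫ y, ({y | agree n y x}.indicator (fun _ => B / 64) y - 4 * (1 / 8) ^ n * B) ∂coin =
      (1 / 2) ^ n * (B / 64) - 4 * (1 / 8) ^ n * B := by
    rw [integral_sub ((integrable_const _).indicator (measurableSet_agree n x))
      (integrable_const _), integral_indicator_const _ (measurableSet_agree n x), measureReal_def,
      coin_agree, ENNReal.toReal_ofReal (by positivity)]
    simp
  have hmono := integral_mono (((integrable_const _).indicator (measurableSet_agree n x)).sub
    (integrable_const _)) hfint hlow
  simp only [Pi.sub_apply] at hmono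
  rw [hint] at hmono
  have htB : tm (2 - α) a n * B = 2 ^ n := by
    rw [tm, hB, mul_assoc, ← Real.rpow_add han]; simp
  have e1 : (2 : ℝ) ^ n * (1 / 2) ^ n = 1 := by rw [← mul_pow]; norm_num
  have e2 : (2 : ℝ) ^ n * (1 / 8) ^ n ≤ 1 / 1024 := by
    rw [← mul_pow, show (2 : ℝ) * (1 / 8) = 1 / 4 by norm_num]
    calc ((1 : ℝ) / 4) ^ n ≤ (1 / 4) ^ 5 :=
          pow_le_pow_of_le_one (by norm_num) (by norm_num) hn
      _ = 1 / 1024 := by norm_num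
  calc (1 : ℝ) / 128 ≤ 2 ^ n * (1 / 2) ^ n / 64 - 4 * (2 ^ n * (1 / 8) ^ n) := by
        rw [e1]; linarith
    _ = tm (2 - α) a n * ((1 / 2) ^ n * (B / 64) - 4 * (1 / 8) ^ n * B) := by
        rw [← htB]; ring
    _ ≤ _ := mul_le_mul_of_nonneg_left hmono (tm_pos H n).le

theorem riesz_top {α : ℝ} (H : Scale (2 - α) a) (m : Fin 2) :
    rieszOffTest α m (sigmaM (2 - α) a) (omegaM a) = ⊤ := by
  have := isProb_omega H
  have hω : omegaM a (cube !₂[4, 0] 4) = 1 := by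
    rw [omega_apply H (measurableSet_cube _ _),
      show gpt a ⁻¹' cube !₂[4, 0] 4 = univ from eq_univ_of_forall fun y => gpt_mem H y,
      measure_univ]
  refine top_le_iff.1 (le_trans ?_ (le_iSup_of_le !₂[4, 0] (le_iSup_of_le 4
    (le_iSup_of_le (by norm_num) le_rfl))))
  rw [hω, inv_one, one_mul]
  have hjoint : Measurable fun q : Plane × Plane =>
      (q.2 m - q.1 m) * dist q.1 q.2 ^ (α - 3) := by
    have h1 : Measurable fun q : Plane × Plane => dist q.1 q.2 := by fun_prop
    have h2 : Measurable fun q : Plane × Plane => q.2 m - q.1 m := by fun_prop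
    exact h2.mul (h1.pow_const _)
  have hF : Measurable fun z : Plane => ENNReal.ofReal ((∫ t in cube !₂[4, 0] 4,
      (t m - z m) * dist z t ^ (α - 3) ∂(omegaM a)) ^ 2) := by
    have := (hjoint.stronglyMeasurable.integral_prod_right'
      (ν := (omegaM a).restrict (cube !₂[4, 0] 4))).measurable
    exact ENNReal.measurable_ofReal.comp (this.pow_const 2)
  rw [setLIntegral_sigma H (measurableSet_cube _ _).compl hF]
  set J := fun n => ENNReal.ofReal (tm (2 - α) a n ^ 2) *
    ∫⁻ x in ppt a n ⁻¹' (cube !₂[4, 0] 4)ᶜ, ENNReal.ofReal ((∫ t in cube !₂[4, 0] 4,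
      (t m - ppt a n x m) * dist (ppt a n x) t ^ (α - 3) ∂(omegaM a)) ^ 2) ∂coin with hJ
  -- Every generation from the fifth on contributes at least the same positive constant.
  have hterm : ∀ n, ENNReal.ofReal ((1 / 128) ^ 2) ≤ J (n + 5) := by
    intro n
    rw [hJ]
    simp only
    rw [show ppt a (n + 5) ⁻¹' (cube !₂[4, 0] 4)ᶜ = univ from
      eq_univ_of_forall fun y => ppt_notMem H (n + 5) y, Measure.restrict_univ,
      ← lintegral_const_mul' _ _ ENNReal.ofReal_ne_top]
    calc ENNReal.ofReal ((1 / 128) ^ 2) = ∫⁻ _, ENNReal.ofReal ((1 / 128) ^ 2) ∂coin := by simp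
      _ ≤ _ := by
        refine lintegral_mono fun x => ?_
        rw [← ENNReal.ofReal_mul (by positivity), ← mul_pow]
        refine ENNReal.ofReal_le_ofReal ?_
        exact pow_le_pow_left₀ (by norm_num) (riesz_inner_ge H m (by omega) x) 2
  calc (⊤ : ℝ≥0∞) = ∑' _ : ℕ, ENNReal.ofReal ((1 / 128) ^ 2) :=
        (ENNReal.tsum_const_eq_top_of_ne_zero (by norm_num)).symm
    _ ≤ ∑' n, J (n + 5) := ENNReal.tsum_le_tsum hterm
    _ ≤ ∑' n, J n := ENNReal.tsum_comp_le_tsum_of_injective (add_left_injective 5) J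

end riesz

/-- For every `0 ≤ α < 2` there is a pair of locally finite positive Borel measures on `ℝ²`
whose Muckenhoupt `A₂^α, A₂^{α,*}` and energy `E₂^α, E₂^{α,*}` constants are finite, but whose
Riesz off-testing constants `R_{m,off,α}`, `m = 1, 2`, are infinite. -/
theorem riesz_offTesting_not_controlled_by_A2_and_energy (α : ℝ) (hα0 : 0 ≤ α) (hα2 : α < 2) :
    ∃ σ ω : Measure Plane, IsLocallyFiniteMeasure σ ∧ IsLocallyFiniteMeasure ω ∧
      muckA2 α σ ω ≠ ⊤ ∧ muckA2 α ω σ ≠ ⊤ ∧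
      energyConst α σ ω ≠ ⊤ ∧ energyConst α ω σ ≠ ⊤ ∧
      ∀ m : Fin 2, rieszOffTest α m σ ω = ⊤ := by
  obtain ⟨a, H⟩ := exists_scale (β := 2 - α) (by linarith) (by linarith)
  have := isFinite_sigma H
  have := isProb_omega H
  exact ⟨sigmaM (2 - α) a, omegaM a, inferInstance, inferInstance, muck_sigma_omega H,
    muck_omega_sigma H, energy_sigma_omega H, energy_omega_sigma H, riesz_top H⟩
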